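/- arXiv:1611.02838 — 2 statements merged into one kernel-verified Lean document; each statement's English description precedes it below -/
import Mathlib

section
/- For every biform g ∈ ℝ[x,y]_{k₁,k₂} of bidegree (k₁,k₂): ( ∫_T g² dσ )^{1/2} ≤ 4^{k₁+k₂} · ∫_T |g| dσ, i.e., ‖g‖₂ ≤ 4^{k₁+k₂}·‖g‖₁. -/
open MeasureTheory MvPolynomial

noncomputable section

namespace BiformPaper

/-- The weight function on the variables: the `x`-variables get weight `(1,0)` and the
`y`-variables get weight `(0,1)`. -/
def bw (n m : ℕ) : Fin n ⊕ Fin m → ℕ × ℕ := Sum.elim (fun _ => (1, 0)) (fun _ => (0, 1))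

/-- The set of biforms of bidegree `(k₁, k₂)`: real polynomials in
`x = (x₁, …, xₙ)` and `y = (y₁, …, y_m)`, homogeneous of degree `k₁` in `x` and of degree
`k₂` in `y`. -/
def Biform (n m k₁ k₂ : ℕ) : Set (MvPolynomial (Fin n ⊕ Fin m) ℝ) :=
  {f | MvPolynomial.IsWeightedHomogeneous (bw n m) f (k₁, k₂)}

/-- Evaluation of a polynomial at a point `(x, y) ∈ ℝⁿ × ℝᵐ`. -/
def beval {n m : ℕ} (f : MvPolynomial (Fin n ⊕ Fin m) ℝ) (x : Fin n → ℝ) (y : Fin m → ℝ) : ℝ :=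
  eval (Sum.elim x y) f

/-- The Euclidean unit sphere `S^{n-1}` in `ℝⁿ`. -/
def unitSphere (n : ℕ) : Set (Fin n → ℝ) := {x | ∑ i, x i ^ 2 = 1}

/-- `σ` is the normalized uniform measure on the unit sphere `S^{n-1} ⊆ ℝⁿ`, i.e., the
unique rotation-invariant Borel probability measure concentrated on the sphere. -/
structure IsSphereMeasure (n : ℕ) (σ : Measure (Fin n → ℝ)) : Prop where
  prob : IsProbabilityMeasure σ
  onSphere : σ (unitSphere n)ᶜ = 0
  invariant : ∀ Q : Matrix (Fin n) (Fin n) ℝ, Q * Q.transpose = 1 → σ.map Q.mulVec = σ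

/-- The average `∫_T f dσ` of `f` over `T = S^{n-1} × S^{m-1}` (with `σ` the product of the
normalized sphere measures `σ₁`, `σ₂`). -/
def bavg {n m : ℕ} (σ₁ : Measure (Fin n → ℝ)) (σ₂ : Measure (Fin m → ℝ))
    (f : MvPolynomial (Fin n ⊕ Fin m) ℝ) : ℝ :=
  ∫ x, ∫ y, beval f x y ∂σ₂ ∂σ₁

/-- The `L²(σ)` inner product `⟨f, g⟩ = ∫_T f·g dσ` on biforms. -/
def bip {n m : ℕ} (σ₁ : Measure (Fin n → ℝ)) (σ₂ : Measure (Fin m → ℝ))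
    (f g : MvPolynomial (Fin n ⊕ Fin m) ℝ) : ℝ :=
  ∫ x, ∫ y, beval f x y * beval g x y ∂σ₂ ∂σ₁

/-- The cone `Pos^{(n,m)}_{(2k₁,2k₂)}` of nonnegative biforms of bidegree `(2k₁, 2k₂)`. -/
def PosSet (n m k₁ k₂ : ℕ) : Set (MvPolynomial (Fin n ⊕ Fin m) ℝ) :=
  {f | f ∈ Biform n m (2 * k₁) (2 * k₂) ∧ ∀ x y, 0 ≤ beval f x y}

/-- The cone `Sq^{(n,m)}_{(2k₁,2k₂)}` of finite sums of squares of biforms of bidegree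
`(k₁, k₂)`. -/
def SqSet (n m k₁ k₂ : ℕ) : Set (MvPolynomial (Fin n ⊕ Fin m) ℝ) :=
  {f | ∃ (N : ℕ) (g : Fin N → MvPolynomial (Fin n ⊕ Fin m) ℝ),
      (∀ i, g i ∈ Biform n m k₁ k₂) ∧ f = ∑ i, g i ^ 2}

/-- The cone `Lf^{(n,m)}_{(2k₁,2k₂)}` of finite sums of products
`ℓᵢ(x)^{2k₁} · ℓ′ᵢ(y)^{2k₂}` of even powers of linear forms. -/
def LfSet (n m k₁ k₂ : ℕ) : Set (MvPolynomial (Fin n ⊕ Fin m) ℝ) :=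
  {f | ∃ (N : ℕ) (a : Fin N → Fin n → ℝ) (b : Fin N → Fin m → ℝ),
      f = ∑ r, (∑ i, C (a r i) * X (Sum.inl i)) ^ (2 * k₁) *
               (∑ j, C (b r j) * X (Sum.inr j)) ^ (2 * k₂)}

/-- The biform `q = (x₁² + ⋯ + xₙ²)^{k₁} · (y₁² + ⋯ + y_m²)^{k₂}`. -/
def qpoly (n m k₁ k₂ : ℕ) : MvPolynomial (Fin n ⊕ Fin m) ℝ :=
  (∑ i : Fin n, X (Sum.inl i) ^ 2) ^ k₁ * (∑ j : Fin m, X (Sum.inr j) ^ 2) ^ k₂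

/-- The hyperplane `𝓜` of biforms of bidegree `(2k₁, 2k₂)` with average `0` on `T`. -/
def MSet (n m k₁ k₂ : ℕ) (σ₁ : Measure (Fin n → ℝ)) (σ₂ : Measure (Fin m → ℝ)) :
    Set (MvPolynomial (Fin n ⊕ Fin m) ℝ) :=
  {f | f ∈ Biform n m (2 * k₁) (2 * k₂) ∧ bavg σ₁ σ₂ f = 0}

/-- The translated section `K̃ = {f ∈ 𝓜 : f + q ∈ K}` of a cone `K`. -/
def tilde (n m k₁ k₂ : ℕ) (σ₁ : Measure (Fin n → ℝ)) (σ₂ : Measure (Fin m → ℝ))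
    (K : Set (MvPolynomial (Fin n ⊕ Fin m) ℝ)) : Set (MvPolynomial (Fin n ⊕ Fin m) ℝ) :=
  {f | f ∈ MSet n m k₁ k₂ σ₁ σ₂ ∧ f + qpoly n m k₁ k₂ ∈ K}

/-- The unit ball `B_𝓜` of `𝓜` in the `L²(σ)` norm. -/
def bball (n m k₁ k₂ : ℕ) (σ₁ : Measure (Fin n → ℝ)) (σ₂ : Measure (Fin m → ℝ)) :
    Set (MvPolynomial (Fin n ⊕ Fin m) ℝ) :=
  {f | f ∈ MSet n m k₁ k₂ σ₁ σ₂ ∧ bip σ₁ σ₂ f f ≤ 1}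

/-- `ψ : ℝ^D → Mset` is a unitary isomorphism: an injective linear map with range `Mset`
carrying the standard inner product of `ℝ^D` to the `L²(σ)` inner product.  Volumes of
Borel subsets `E` of `Mset` are computed as the Lebesgue measure of `ψ ⁻¹' E`
(by Lemma 1.1 of the paper this does not depend on the choice of `ψ`). -/
structure IsUnitaryParam (n m D : ℕ) (σ₁ : Measure (Fin n → ℝ)) (σ₂ : Measure (Fin m → ℝ))
    (Mset : Set (MvPolynomial (Fin n ⊕ Fin m) ℝ))
    (ψ : (Fin D → ℝ) →ₗ[ℝ] MvPolynomial (Fin n ⊕ Fin m) ℝ) : Prop where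
  inj : Function.Injective ψ
  range : Set.range ψ = Mset
  ip : ∀ a b : Fin D → ℝ, bip σ₁ σ₂ (ψ a) (ψ b) = ∑ i, a i * b i

/-- The apolar inner product `⟨r, s⟩_d = D_r(s)` on biforms, where `D_r` is the
differential operator obtained from `r` by replacing each variable by the corresponding
partial derivative; its value on a pair of forms of the same bidegree is
`∑_α r_α · s_α · α!`. -/
def apolar {n m : ℕ} (r s : MvPolynomial (Fin n ⊕ Fin m) ℝ) : ℝ :=
  ∑ α ∈ r.support, coeff α r * coeff α s * α.prod fun _ k => (k.factorial : ℝ)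

end BiformPaper

/-!
The reverse Hölder inequality `‖g‖₂ ≤ c ‖g‖₁` follows by interpolation (Lyapunov) from the fourth
moment bound `‖g‖₄² ≤ c ‖g‖₂²`. In the latter form the constants of two functions multiply under
products of measure spaces, so it is enough to obtain `c = 4 ^ k` for a form of degree `k` on one
sphere.

Rotation invariance of the measure gives `∫ Δp = d (d + n - 2) ∫ p` for every form `p` of degree
`d`. For a solid harmonic `h` of degree `k`, applying this to `h ^ 2` and to `h ^ 4` computes
`∫ |∇h|²` and `∫ h² |∇h|²`. By Cauchy–Schwarz, a fourth moment bound with constant `c` for the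
partial derivatives of `h`, which are again harmonic, becomes one with constant `3 c` for `h`, so
`c = 3 ^ k` by induction. Finally, a form of degree `k + 2` is on the sphere the sum of a solid
harmonic and a form of degree `k`, orthogonal to each other, and the constants add up over
orthogonal sums: `3 ^ (k + 2) + 4 ^ k ≤ 4 ^ (k + 2)`.
-/

namespace BiformPaper

section FourthMoments

variable {Ω : Type*} [MeasurableSpace Ω] {μ : Measure Ω}

theorem sq_integral_mul_le {f g : Ω → ℝ} (hf : MemLp f 2 μ) (hg : MemLp g 2 μ) :
    (∫ x, f x * g x ∂μ) ^ 2 ≤ (∫ x, f x ^ 2 ∂μ) * ∫ x, g x ^ 2 ∂μ := by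
  have hinner {u v : Ω → ℝ} (hu : MemLp u 2 μ) (hv : MemLp v 2 μ) :
      inner ℝ (hu.toLp u) (hv.toLp v) = ∫ x, u x * v x ∂μ := by
    rw [L2.inner_def]
    refine integral_congr_ae ?_
    filter_upwards [hu.coeFn_toLp, hv.coeFn_toLp] with x hx hy
    simp [hx, hy, mul_comm]
  have h := real_inner_mul_inner_self_le (hf.toLp f) (hg.toLp g)
  simpa only [hinner, ← sq] using h

theorem memLp_two_sq {f : Ω → ℝ} (hf : MemLp f 4 μ) : MemLp (fun x => f x ^ 2) 2 μ := by
  have h : MemLp (fun x => ‖f x‖ ^ (2 : ENNReal).toReal) (4 / 2) μ := hf.norm_rpow_div 2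
  rw [← (ENNReal.eq_div_iff two_ne_zero ENNReal.ofNat_ne_top).2
    (by norm_num : (2 : ENNReal) * 2 = 4)] at h
  simpa using h

theorem integrable_pow_four {f : Ω → ℝ} (hf : MemLp f 4 μ) : Integrable (fun x => f x ^ 4) μ := by
  simpa only [← pow_mul] using (memLp_two_sq hf).integrable_sq

theorem integrable_sq_mul_sq {f g : Ω → ℝ} (hf : MemLp f 4 μ) (hg : MemLp g 4 μ) :
    Integrable (fun x => f x ^ 2 * g x ^ 2) μ :=
  (memLp_two_sq hf).integrable_mul (memLp_two_sq hg)

theorem integral_add_sq_of_orthogonal {f g : Ω → ℝ} (hf : MemLp f 2 μ) (hg : MemLp g 2 μ)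
    (hfg : ∫ x, f x * g x ∂μ = 0) :
    ∫ x, (f x + g x) ^ 2 ∂μ = ∫ x, f x ^ 2 ∂μ + ∫ x, g x ^ 2 ∂μ := by
  have hcross : Integrable (fun x => 2 * (f x * g x)) μ := (hf.integrable_mul hg).const_mul 2
  have hsquares : Integrable (fun x => f x ^ 2 + g x ^ 2) μ :=
    hf.integrable_sq.add hg.integrable_sq
  calc ∫ x, (f x + g x) ^ 2 ∂μ = ∫ x, (f x ^ 2 + g x ^ 2 + 2 * (f x * g x)) ∂μ :=
        integral_congr_ae (.of_forall fun x => by ring)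
    _ = ∫ x, f x ^ 2 ∂μ + ∫ x, g x ^ 2 ∂μ := by
        rw [integral_add hsquares hcross, integral_add hf.integrable_sq hg.integrable_sq,
          integral_const_mul, hfg, mul_zero, add_zero]

theorem integrable_sq_mul_sq_of_prod {Ω' : Type*} [MeasurableSpace Ω'] {ν : Measure Ω'}
    [SFinite μ] [IsProbabilityMeasure ν] {F : Ω × Ω' → ℝ} (hF : MemLp F 4 (μ.prod ν)) :
    Integrable (fun z : Ω × Ω' × Ω' => F (z.1, z.2.1) ^ 2 * F (z.1, z.2.2) ^ 2)
      (μ.prod (ν.prod ν)) := by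
  have hfst : MeasurePreserving (fun z : Ω × Ω' × Ω' => (z.1, z.2.1)) (μ.prod (ν.prod ν))
      (μ.prod ν) := (MeasurePreserving.id μ).prod measurePreserving_fst
  have hsnd : MeasurePreserving (fun z : Ω × Ω' × Ω' => (z.1, z.2.2)) (μ.prod (ν.prod ν))
      (μ.prod ν) := (MeasurePreserving.id μ).prod measurePreserving_snd
  exact integrable_sq_mul_sq (hF.comp_measurePreserving hfst) (hF.comp_measurePreserving hsnd)

/-- The reverse Hölder inequality `‖f‖₄² ≤ c ‖f‖₂²` for a function `f ∈ L⁴(μ)`, written with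
moments. The constant `c²` bounds the kurtosis of `f`; its square root `c` is the normalization
that is additive over orthogonal sums and multiplicative over products. -/
structure HasFourthMomentBound (f : Ω → ℝ) (μ : Measure Ω) (c : ℝ) : Prop where
  memLp : MemLp f 4 μ
  pos : 0 < c
  integral_le : ∫ x, f x ^ 4 ∂μ ≤ (c * ∫ x, f x ^ 2 ∂μ) ^ 2

namespace HasFourthMomentBound

variable {f g : Ω → ℝ} {a b c : ℝ}

theorem mono (hf : HasFourthMomentBound f μ a) (hab : a ≤ b) : HasFourthMomentBound f μ b where
  memLp := hf.memLp
  pos := hf.pos.trans_le hab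
  integral_le := by
    have : 0 ≤ ∫ x, f x ^ 2 ∂μ := integral_nonneg fun x => sq_nonneg _
    have := hf.pos
    exact hf.integral_le.trans (by gcongr)

theorem congr (hf : HasFourthMomentBound f μ a) (hfg : f =ᵐ[μ] g) :
    HasFourthMomentBound g μ a where
  memLp := hf.memLp.ae_eq hfg
  pos := hf.pos
  integral_le := by
    have hpow (k : ℕ) : ∫ x, g x ^ k ∂μ = ∫ x, f x ^ k ∂μ :=
      integral_congr_ae (hfg.mono fun x hx => by simp only [hx])
    simpa only [hpow] using hf.integral_le

theorem integral_sq_mul_sq_le (hf : HasFourthMomentBound f μ a) (hg : HasFourthMomentBound g μ b) :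
    ∫ x, f x ^ 2 * g x ^ 2 ∂μ ≤ (a * ∫ x, f x ^ 2 ∂μ) * (b * ∫ x, g x ^ 2 ∂μ) := by
  have hf0 : 0 ≤ a * ∫ x, f x ^ 2 ∂μ :=
    mul_nonneg hf.pos.le (integral_nonneg fun x => sq_nonneg _)
  have hg0 : 0 ≤ b * ∫ x, g x ^ 2 ∂μ :=
    mul_nonneg hg.pos.le (integral_nonneg fun x => sq_nonneg _)
  have hcs := sq_integral_mul_le (memLp_two_sq hf.memLp) (memLp_two_sq hg.memLp)
  simp only [← pow_mul, Nat.reduceMul] at hcs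
  refine le_of_abs_le (abs_le_of_sq_le_sq ?_ (mul_nonneg hf0 hg0))
  rw [mul_pow]
  exact hcs.trans (mul_le_mul hf.integral_le hg.integral_le
    (integral_nonneg fun x => by positivity) (by positivity))

theorem integral_sq_sum_smul_sq_le {ι : Type*} (s : Finset ι) {f : ι → Ω → ℝ} {c w : ι → ℝ}
    (hw : ∀ i, 0 ≤ w i) (hf : ∀ i, HasFourthMomentBound (f i) μ (c i)) :
    ∫ x, (∑ i ∈ s, w i * f i x ^ 2) ^ 2 ∂μ ≤ (∑ i ∈ s, w i * (c i * ∫ x, f i x ^ 2 ∂μ)) ^ 2 := by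
  have hint (i j : ι) := (integrable_sq_mul_sq (hf i).memLp (hf j).memLp).const_mul (w i * w j)
  calc ∫ x, (∑ i ∈ s, w i * f i x ^ 2) ^ 2 ∂μ
      = ∫ x, ∑ i ∈ s, ∑ j ∈ s, w i * w j * (f i x ^ 2 * f j x ^ 2) ∂μ := by
        simp only [sq (∑ _ ∈ s, _), Finset.sum_mul_sum, mul_mul_mul_comm]
    _ = ∑ i ∈ s, ∑ j ∈ s, w i * w j * ∫ x, f i x ^ 2 * f j x ^ 2 ∂μ := by
        rw [integral_finsetSum _ fun i _ => integrable_finsetSum _ fun j _ => hint i j]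
        refine Finset.sum_congr rfl fun i _ => ?_
        rw [integral_finsetSum _ fun j _ => hint i j]
        simp only [integral_const_mul]
    _ ≤ ∑ i ∈ s, ∑ j ∈ s, w i * w j * ((c i * ∫ x, f i x ^ 2 ∂μ) * (c j * ∫ x, f j x ^ 2 ∂μ)) :=
        Finset.sum_le_sum fun i _ => Finset.sum_le_sum fun j _ =>
          mul_le_mul_of_nonneg_left ((hf i).integral_sq_mul_sq_le (hf j)) (mul_nonneg (hw i) (hw j))
    _ = (∑ i ∈ s, w i * (c i * ∫ x, f i x ^ 2 ∂μ)) ^ 2 := by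
        simp only [sq (∑ _ ∈ s, _), Finset.sum_mul_sum, mul_mul_mul_comm]

theorem integrable_sq [IsFiniteMeasure μ] (hf : HasFourthMomentBound f μ c) :
    Integrable (fun x => f x ^ 2) μ :=
  (hf.memLp.mono_exponent (by norm_num : (2 : ENNReal) ≤ 4)).integrable_sq

theorem add_of_orthogonal [IsFiniteMeasure μ] (hf : HasFourthMomentBound f μ a)
    (hg : HasFourthMomentBound g μ b) (hfg : ∫ x, f x * g x ∂μ = 0) :
    HasFourthMomentBound (fun x => f x + g x) μ (a + b) := by
  have ha := hf.pos
  have hb := hg.pos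
  have hsum : MemLp (fun x => f x + g x) 4 μ := hf.memLp.add hg.memLp
  -- The weights `1 / a` and `1 / b` are what makes the constants add up.
  have hpoint (x : Ω) : (f x + g x) ^ 4 ≤ (a + b) ^ 2 * (a⁻¹ * f x ^ 2 + b⁻¹ * g x ^ 2) ^ 2 := by
    have hcs : (f x + g x) ^ 2 ≤ (a + b) * (a⁻¹ * f x ^ 2 + b⁻¹ * g x ^ 2) := by
      field_simp
      nlinarith only [sq_nonneg (b * f x - a * g x)]
    calc (f x + g x) ^ 4 = ((f x + g x) ^ 2) ^ 2 := by ring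
      _ ≤ ((a + b) * (a⁻¹ * f x ^ 2 + b⁻¹ * g x ^ 2)) ^ 2 := by gcongr
      _ = _ := mul_pow ..
  have hweighted := integral_sq_sum_smul_sq_le (μ := μ) Finset.univ (f := ![f, g]) (c := ![a, b])
    (w := ![a⁻¹, b⁻¹]) (by simp [Fin.forall_fin_two, ha.le, hb.le])
    (by simp [Fin.forall_fin_two, hf, hg])
  simp only [Fin.sum_univ_two, Matrix.cons_val_zero, Matrix.cons_val_one,
    inv_mul_cancel_left₀ ha.ne', inv_mul_cancel_left₀ hb.ne'] at hweighted
  have hint : Integrable (fun x => (a⁻¹ * f x ^ 2 + b⁻¹ * g x ^ 2) ^ 2) μ :=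
    (((memLp_two_sq hf.memLp).const_mul a⁻¹).add
      ((memLp_two_sq hg.memLp).const_mul b⁻¹)).integrable_sq
  refine ⟨hsum, add_pos ha hb, ?_⟩
  calc ∫ x, (f x + g x) ^ 4 ∂μ
      ≤ (a + b) ^ 2 * ∫ x, (a⁻¹ * f x ^ 2 + b⁻¹ * g x ^ 2) ^ 2 ∂μ :=
        (integral_mono (integrable_pow_four hsum) (hint.const_mul _) hpoint).trans_eq
          (integral_const_mul ..)
    _ ≤ (a + b) ^ 2 * (∫ x, f x ^ 2 ∂μ + ∫ x, g x ^ 2 ∂μ) ^ 2 := by gcongr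
    _ = ((a + b) * ∫ x, (f x + g x) ^ 2 ∂μ) ^ 2 := by
        rw [integral_add_sq_of_orthogonal (hf.memLp.mono_exponent (by norm_num))
          (hg.memLp.mono_exponent (by norm_num)) hfg, mul_pow]

theorem sqrt_integral_sq_le [IsFiniteMeasure μ] (hf : HasFourthMomentBound f μ c) :
    √(∫ x, f x ^ 2 ∂μ) ≤ c * ∫ x, |f x| ∂μ := by
  have hc := hf.pos
  set s := √(∫ x, f x ^ 2 ∂μ)
  set M := ∫ x, |f x| ∂μ
  have : 0 ≤ M := integral_nonneg fun x => abs_nonneg _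
  have hs : s ^ 2 = ∫ x, f x ^ 2 ∂μ := Real.sq_sqrt (integral_nonneg fun x => sq_nonneg _)
  rcases (show 0 ≤ s from Real.sqrt_nonneg _).eq_or_lt with h0 | h0
  · rw [← h0]
    positivity
  have habs := (hf.memLp.integrable (by norm_num)).abs.const_mul (2 * (c * s) ^ 3)
  have h4 := integrable_pow_four hf.memLp
  -- Lyapunov interpolation, linearized: `3r²t² ≤ 2r³t + t⁴` for `r, t ≥ 0`. The choice `r = c s`
  -- turns the fourth moment bound `∫ f⁴ ≤ (c s²)²` into `∫ f⁴ ≤ r² s²`.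
  have hpoint (x : Ω) : 3 * (c * s) ^ 2 * f x ^ 2 ≤ 2 * (c * s) ^ 3 * |f x| + f x ^ 4 := by
    have hd : 0 ≤ |f x| * (|f x| - c * s) ^ 2 * (|f x| + 2 * (c * s)) := by positivity
    rw [← sq_abs (f x), show f x ^ 4 = |f x| ^ 4 from (Even.pow_abs (by decide) _).symm]
    linarith
  have hint := integral_mono (hf.integrable_sq.const_mul _) (habs.add h4) hpoint
  simp only [Pi.add_apply] at hint
  rw [integral_add habs h4, integral_const_mul, integral_const_mul, ← hs] at hint
  have hle := hf.integral_le
  rw [← hs] at hle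
  have : 2 * (c ^ 2 * s ^ 3) * s ≤ 2 * (c ^ 2 * s ^ 3) * (c * M) := by linarith
  exact le_of_mul_le_mul_left this (by positivity)

theorem prod {Ω' : Type*} [MeasurableSpace Ω'] {ν : Measure Ω'} [IsProbabilityMeasure μ]
    [IsProbabilityMeasure ν] {F : Ω × Ω' → ℝ} (hF : MemLp F 4 (μ.prod ν))
    (hleft : ∀ y, HasFourthMomentBound (fun x => F (x, y)) μ a)
    (hright : ∀ x, HasFourthMomentBound (fun y => F (x, y)) ν b) :
    HasFourthMomentBound F (μ.prod ν) (a * b) := by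
  obtain ⟨x₀⟩ := μ.nonempty_of_neZero
  obtain ⟨y₀⟩ := ν.nonempty_of_neZero
  have ha := (hleft y₀).pos
  have hb := (hright x₀).pos
  have hF2 : Integrable (fun z => F z ^ 2) (μ.prod ν) :=
    (hF.mono_exponent (by norm_num : (2 : ENNReal) ≤ 4)).integrable_sq
  have hF4 : Integrable (fun z => F z ^ 4) (μ.prod ν) := integrable_pow_four hF
  have hpair := integrable_sq_mul_sq_of_prod hF
  have hsq (x : Ω) : (∫ y, F (x, y) ^ 2 ∂ν) ^ 2 =
      ∫ w, F (x, w.1) ^ 2 * F (x, w.2) ^ 2 ∂(ν.prod ν) := by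
    rw [integral_prod_mul (fun y => F (x, y) ^ 2) fun y => F (x, y) ^ 2, sq]
  refine ⟨hF, mul_pos ha hb, ?_⟩
  calc ∫ z, F z ^ 4 ∂μ.prod ν
      = ∫ x, ∫ y, F (x, y) ^ 4 ∂ν ∂μ := integral_prod _ hF4
    _ ≤ ∫ x, b ^ 2 * ∫ w, F (x, w.1) ^ 2 * F (x, w.2) ^ 2 ∂(ν.prod ν) ∂μ :=
        integral_mono hF4.integral_prod_left (hpair.integral_prod_left.const_mul _) fun x =>
          ((hright x).integral_le.trans_eq (mul_pow ..)).trans_eq (by rw [hsq])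
    _ = b ^ 2 * ∫ w, ∫ x, F (x, w.1) ^ 2 * F (x, w.2) ^ 2 ∂μ ∂(ν.prod ν) := by
        rw [integral_const_mul, integral_integral_swap hpair]
    _ ≤ b ^ 2 * ∫ w, (a * ∫ x, F (x, w.1) ^ 2 ∂μ) * (a * ∫ x, F (x, w.2) ^ 2 ∂μ) ∂(ν.prod ν) := by
        have hslice := hF2.integral_prod_right.const_mul a
        exact mul_le_mul_of_nonneg_left (integral_mono hpair.integral_prod_right
          (hslice.mul_prod hslice) fun w => (hleft w.1).integral_sq_mul_sq_le (hleft w.2))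
          (sq_nonneg b)
    _ = (a * b * ∫ z, F z ^ 2 ∂μ.prod ν) ^ 2 := by
        rw [integral_prod_mul (fun y => a * ∫ x, F (x, y) ^ 2 ∂μ) fun y => a * ∫ x, F (x, y) ^ 2 ∂μ,
          integral_const_mul, integral_prod_symm _ hF2]
        ring

end HasFourthMomentBound

end FourthMoments

section Harmonic

variable {ι R : Type*}

theorem pderiv_pderiv_comm [CommRing R] (i j : ι) (p : MvPolynomial ι R) :
    pderiv i (pderiv j p) = pderiv j (pderiv i p) := by
  have hcomm : ⁅pderiv (R := R) i, pderiv (R := R) j⁆ = 0 := by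
    classical
    refine derivation_ext fun k => ?_
    rw [Derivation.commutator_apply, pderiv_X, pderiv_X, Pi.single_apply, Pi.single_apply]
    split_ifs <;> simp
  rw [← sub_eq_zero, ← Derivation.commutator_apply, hcomm, Derivation.zero_apply]

theorem pderiv_X_mul [CommSemiring R] [DecidableEq ι] (i j : ι) (p : MvPolynomial ι R) :
    pderiv i (X j * p) = (if i = j then p else 0) + X j * pderiv i p := by
  rw [Derivation.leibniz, pderiv_X, Pi.single_apply, add_comm]
  simp [eq_comm]

theorem pderiv_eq_zero_of_isHomogeneous_zero [CommSemiring R] {p : MvPolynomial ι R}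
    (hp : p.IsHomogeneous 0) (i : ι) : pderiv i p = 0 := by
  rw [totalDegree_eq_zero_iff_eq_C.1 (Nat.le_zero.1 hp.totalDegree_le), pderiv_C]

variable [Fintype ι]

/-- The Laplace operator `∑ᵢ ∂ᵢ²` acting on polynomials. -/
def laplacian [CommSemiring R] : MvPolynomial ι R →ₗ[R] MvPolynomial ι R :=
  ∑ i, (pderiv i).toLinearMap ∘ₗ (pderiv i).toLinearMap

/-- The quadratic form `∑ᵢ xᵢ²`, as a polynomial. -/
def normSq (ι R : Type*) [Fintype ι] [CommSemiring R] : MvPolynomial ι R :=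
  ∑ i, X i ^ 2

section CommSemiring

variable [CommSemiring R]

theorem laplacian_apply (p : MvPolynomial ι R) : laplacian p = ∑ i, pderiv i (pderiv i p) := by
  simp [laplacian]

theorem laplacian_mul (p q : MvPolynomial ι R) :
    laplacian (p * q) =
      p * laplacian q + 2 * ∑ i, pderiv i p * pderiv i q + q * laplacian p := by
  simp only [laplacian_apply, Derivation.leibniz, map_add, smul_eq_mul, Finset.mul_sum,
    ← Finset.sum_add_distrib]
  exact Finset.sum_congr rfl fun i _ => by ring

theorem pderiv_normSq (i : ι) : pderiv i (normSq ι R) = 2 * X i := by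
  classical
  simp [normSq, pderiv_X, Pi.single_apply, pow_two, two_mul, Finset.sum_add_distrib]

theorem laplacian_normSq : laplacian (normSq ι R) = 2 * (Fintype.card ι : MvPolynomial ι R) := by
  have hderiv (i : ι) : pderiv i (2 * X i : MvPolynomial ι R) = 2 := by
    rw [two_mul, map_add, pderiv_X_self, one_add_one_eq_two]
  simp only [laplacian_apply, pderiv_normSq, hderiv, Finset.sum_const, Finset.card_univ,
    nsmul_eq_mul]
  exact mul_comm _ _

theorem isHomogeneous_normSq : (normSq ι R).IsHomogeneous 2 :=
  IsHomogeneous.sum _ _ _ fun i _ => isHomogeneous_X_pow i 2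

theorem isHomogeneous_laplacian {p : MvPolynomial ι R} {k : ℕ} (hp : p.IsHomogeneous k) :
    (laplacian p).IsHomogeneous (k - 2) := by
  rw [laplacian_apply]
  exact IsHomogeneous.sum _ _ _ fun i _ => hp.pderiv.pderiv

theorem laplacian_eq_zero_of_lt_two {p : MvPolynomial ι R} {k : ℕ} (hp : p.IsHomogeneous k)
    (hk : k < 2) : laplacian p = 0 := by
  rw [laplacian_apply]
  refine Finset.sum_eq_zero fun i _ => pderiv_eq_zero_of_isHomogeneous_zero ?_ i
  simpa only [show k - 1 = 0 by omega] using hp.pderiv (i := i)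

theorem laplacian_normSq_mul {p : MvPolynomial ι R} {k : ℕ} (hp : p.IsHomogeneous k) :
    laplacian (normSq ι R * p) =
      normSq ι R * laplacian p + ((2 * Fintype.card ι + 4 * k : ℕ) : MvPolynomial ι R) * p := by
  have heuler := hp.sum_X_mul_pderiv
  simp only [laplacian_mul, pderiv_normSq, laplacian_normSq, mul_assoc, ← Finset.mul_sum, heuler,
    nsmul_eq_mul]
  push_cast
  ring

/-- A solid spherical harmonic of degree `k`: a homogeneous harmonic polynomial. -/
structure IsSolidHarmonic (p : MvPolynomial ι R) (k : ℕ) : Prop where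
  isHomogeneous : p.IsHomogeneous k
  laplacian_eq_zero : laplacian p = 0

end CommSemiring

theorem IsSolidHarmonic.pderiv [CommRing R] {p : MvPolynomial ι R} {k : ℕ}
    (hp : IsSolidHarmonic p k) (i : ι) : IsSolidHarmonic (pderiv i p) (k - 1) where
  isHomogeneous := hp.isHomogeneous.pderiv
  laplacian_eq_zero := by
    simp only [laplacian_apply, pderiv_pderiv_comm _ i, ← map_sum]
    rw [← laplacian_apply, hp.laplacian_eq_zero, map_zero]

theorem IsSolidHarmonic.laplacian_sq [CommSemiring R] {p : MvPolynomial ι R} {k : ℕ}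
    (hp : IsSolidHarmonic p k) : laplacian (p ^ 2) = 2 * ∑ i, MvPolynomial.pderiv i p ^ 2 := by
  rw [sq, laplacian_mul, hp.laplacian_eq_zero]
  simp only [mul_zero, zero_add, add_zero, sq]

theorem IsSolidHarmonic.laplacian_pow_four [CommSemiring R] {p : MvPolynomial ι R} {k : ℕ}
    (hp : IsSolidHarmonic p k) :
    laplacian (p ^ 4) = 12 * (p ^ 2 * ∑ i, MvPolynomial.pderiv i p ^ 2) := by
  have hgrad : ∑ i, MvPolynomial.pderiv i (p ^ 2) * MvPolynomial.pderiv i (p ^ 2) =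
      4 * (p ^ 2 * ∑ i, MvPolynomial.pderiv i p ^ 2) := by
    simp only [Derivation.leibniz_pow, Finset.mul_sum]
    refine Finset.sum_congr rfl fun i _ => ?_
    simp only [Nat.add_one_sub_one, pow_one, smul_eq_mul, nsmul_eq_mul, Nat.cast_ofNat]
    ring
  rw [show p ^ 4 = p ^ 2 * p ^ 2 by ring, laplacian_mul, hp.laplacian_sq, hgrad]
  ring

theorem sum_X_mul_pderiv_sum_X_mul_pderiv [CommSemiring R] (p : MvPolynomial ι R) :
    ∑ j, X j * pderiv j (∑ i, X i * pderiv i p) =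
      ∑ i, X i * pderiv i p + ∑ i, ∑ j, X i * X j * pderiv j (pderiv i p) := by
  classical
  simp only [map_sum, pderiv_X_mul, Finset.mul_sum, mul_add, Finset.sum_add_distrib,
    Finset.sum_ite_eq, Finset.mem_univ, if_true]
  rw [Finset.sum_comm]
  simp only [← mul_assoc, mul_comm (X _) (X _)]

-- Every summand on the left is the rotation generator `xᵢ∂ⱼ - xⱼ∂ᵢ` applied to `xⱼ∂ᵢp`, so the
-- left side integrates to zero over the sphere.
theorem sum_X_mul_pderiv_rotation [CommRing R] {p : MvPolynomial ι R} {k : ℕ}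
    (hp : p.IsHomogeneous k) :
    ∑ i, ∑ j, (X i * pderiv j (X j * pderiv i p) - X j * pderiv i (X j * pderiv i p)) =
      (k * (k + Fintype.card ι - 2) : MvPolynomial ι R) * p - normSq ι R * laplacian p := by
  classical
  have heuler : ∑ i, X i * pderiv i p = k * p := by
    rw [hp.sum_X_mul_pderiv, nsmul_eq_mul]
  have heuler_sq := sum_X_mul_pderiv_sum_X_mul_pderiv p
  have hcast (q : MvPolynomial ι R) (i : ι) :
      pderiv i ((k : MvPolynomial ι R) * q) = (k : MvPolynomial ι R) * pderiv i q := by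
    rw [← nsmul_eq_mul, map_nsmul, nsmul_eq_mul]
  simp only [heuler, hcast, mul_left_comm _ (k : MvPolynomial ι R), ← Finset.mul_sum] at heuler_sq
  have hleft : ∑ i, ∑ j, X i * pderiv j (X j * pderiv i p) =
      Fintype.card ι * (k * p) + ∑ i, ∑ j, X i * X j * pderiv j (pderiv i p) := by
    simp only [pderiv_X_mul, if_true, mul_add, Finset.sum_add_distrib, Finset.sum_const,
      Finset.card_univ, nsmul_eq_mul, ← Finset.mul_sum, heuler, mul_assoc]
  have hright : ∑ i, ∑ j, X j * pderiv i (X j * pderiv i p) =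
      k * p + normSq ι R * laplacian p := by
    simp only [pderiv_X_mul, mul_add, mul_ite, mul_zero, Finset.sum_add_distrib,
      Finset.sum_ite_eq, Finset.mem_univ, if_true, heuler, normSq, laplacian_apply,
      Finset.sum_mul_sum, ← mul_assoc, ← sq]
    rw [Finset.sum_comm]
  simp only [Finset.sum_sub_distrib]
  rw [hleft, hright]
  linear_combination -heuler_sq

section Field

variable {K : Type*} [Field K] [CharZero K]

theorem exists_normSq_mul_laplacian_add_eq {k c : ℕ} (hc : c ≠ 0) {r : MvPolynomial ι K}
    (hr : r.IsHomogeneous k) :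
    ∃ q : MvPolynomial ι K, q.IsHomogeneous k ∧
      normSq ι K * laplacian q + (c : MvPolynomial ι K) * q = r := by
  induction k using Nat.strong_induction_on generalizing c r with
  | _ k ih =>
    have hcC : (c : MvPolynomial ι K) * C (c : K)⁻¹ = 1 := by
      rw [← map_natCast C, ← C_mul, mul_inv_cancel₀ (Nat.cast_ne_zero.2 hc), C_1]
    have hlap (q : MvPolynomial ι K) : laplacian (C (c : K)⁻¹ * q) = C (c : K)⁻¹ * laplacian q := by
      rw [C_mul', map_smul, ← C_mul']
    rcases lt_or_ge k 2 with hk | hk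
    · refine ⟨C (c : K)⁻¹ * r, by simpa using (isHomogeneous_C ι (c : K)⁻¹).mul hr, ?_⟩
      rw [hlap, laplacian_eq_zero_of_lt_two hr hk]
      linear_combination r * hcC
    · -- Applying `Δ` to the equation yields one of the same kind for `s = Δ q`, two degrees lower.
      obtain ⟨s, hs, hsr⟩ := ih (k - 2) (by omega) (c := 2 * Fintype.card ι + 4 * (k - 2) + c)
        (by omega) (isHomogeneous_laplacian hr)
      have hns : (normSq ι K * s).IsHomogeneous k := by
        simpa [Nat.add_sub_cancel' hk] using isHomogeneous_normSq.mul hs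
      refine ⟨C (c : K)⁻¹ * (r - normSq ι K * s),
        by simpa using (isHomogeneous_C ι (c : K)⁻¹).mul (hr.sub hns), ?_⟩
      rw [hlap, map_sub, laplacian_normSq_mul hs, ← hsr, Nat.cast_add _ c]
      linear_combination r * hcC

theorem exists_isSolidHarmonic_add_normSq_mul [Nonempty ι] {k : ℕ} {p : MvPolynomial ι K}
    (hp : p.IsHomogeneous (k + 2)) :
    ∃ h q : MvPolynomial ι K, IsSolidHarmonic h (k + 2) ∧ q.IsHomogeneous k ∧
      p = h + normSq ι K * q := by
  have hcard : 2 * Fintype.card ι + 4 * k ≠ 0 := by have := Fintype.card_pos (α := ι); omega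
  have hlap : (laplacian p).IsHomogeneous k := isHomogeneous_laplacian hp
  obtain ⟨q, hq, hqp⟩ := exists_normSq_mul_laplacian_add_eq hcard hlap
  have hnq : (normSq ι K * q).IsHomogeneous (k + 2) := add_comm 2 k ▸ isHomogeneous_normSq.mul hq
  refine ⟨p - normSq ι K * q, q, ⟨hp.sub hnq, ?_⟩, hq, (sub_add_cancel _ _).symm⟩
  rw [map_sub, laplacian_normSq_mul hq, hqp, sub_self]

end Field

end Harmonic

section SphereMeasure

theorem isCompact_unitSphere (n : ℕ) : IsCompact (unitSphere n) := by
  refine Metric.isCompact_of_isClosed_isBounded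
    (isClosed_eq (by fun_prop) continuous_const) ?_
  refine (Metric.isBounded_closedBall (x := (0 : Fin n → ℝ)) (r := 1)).subset fun x hx => ?_
  rw [mem_closedBall_zero_iff, pi_norm_le_iff_of_nonneg zero_le_one]
  intro i
  rw [Real.norm_eq_abs, ← sq_le_one_iff_abs_le_one, ← show ∑ i, x i ^ 2 = 1 from hx]
  exact Finset.single_le_sum (f := fun i => x i ^ 2) (fun i _ => sq_nonneg _) (Finset.mem_univ i)

theorem mulVec_mem_unitSphere {n : ℕ} {Q : Matrix (Fin n) (Fin n) ℝ} (hQ : Q * Q.transpose = 1)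
    {x : Fin n → ℝ} (hx : x ∈ unitSphere n) : Q.mulVec x ∈ unitSphere n := by
  have hdot (v : Fin n → ℝ) : ∑ i, v i ^ 2 = v ⬝ᵥ v := by simp only [dotProduct, sq]
  rw [unitSphere, Set.mem_ofPred_eq, hdot] at hx ⊢
  rw [Matrix.dotProduct_mulVec, Matrix.vecMul_mulVec, ← Matrix.dotProduct_mulVec,
    mul_eq_one_comm.1 hQ, Matrix.one_mulVec, hx]

theorem eval_normSq_of_mem_unitSphere {n : ℕ} {x : Fin n → ℝ} (hx : x ∈ unitSphere n) :
    eval x (normSq (Fin n) ℝ) = 1 := by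
  simpa [normSq, unitSphere] using hx

theorem memLp_of_continuous_of_isCompact {X : Type*} [TopologicalSpace X] [MeasurableSpace X]
    [OpensMeasurableSpace X] {μ : Measure X} [IsFiniteMeasure μ] {K : Set X} (hK : IsCompact K)
    (hμK : μ Kᶜ = 0) {F : X → ℝ} (hF : Continuous F) (p : ENNReal) : MemLp F p μ := by
  obtain ⟨B, hB⟩ := hK.exists_bound_of_continuousOn hF.continuousOn
  have hbound : ∀ᵐ x ∂μ, ‖F x‖ ≤ B :=
    (show ∀ᵐ x ∂μ, x ∈ K from mem_ae_iff.2 hμK).mono hB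
  exact MemLp.of_bound hF.measurable.aestronglyMeasurable B hbound

theorem hasDerivAt_eval_of_derivation {ι : Type*}
    (D : Derivation ℝ (MvPolynomial ι ℝ) (MvPolynomial ι ℝ)) {u : ℝ → ι → ℝ} {t : ℝ}
    (hu : ∀ i, HasDerivAt (fun s => u s i) (eval (u t) (D (X i))) t) (p : MvPolynomial ι ℝ) :
    HasDerivAt (fun s => eval (u s) p) (eval (u t) (D p)) t := by
  induction p using MvPolynomial.induction_on with
  | C a => simpa using hasDerivAt_const t a
  | add p q hp hq => simpa using hp.fun_add hq
  | mul_X p i hp => simpa [add_comm, mul_comm] using hp.fun_mul (hu i)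

section

open scoped Matrix.Norms.Operator

theorem exp_smul_mul_transpose {ι : Type*} [Fintype ι] [DecidableEq ι] {A : Matrix ι ι ℝ}
    (hA : A.transpose = -A) (t : ℝ) :
    NormedSpace.exp (t • A) * (NormedSpace.exp (t • A)).transpose = 1 := by
  rw [← Matrix.exp_transpose, Matrix.transpose_smul, hA, smul_neg, Matrix.exp_neg]
  exact Matrix.mul_nonsing_inv _ ((Matrix.isUnit_iff_isUnit_det _).1 (Matrix.isUnit_exp _))

theorem hasDerivAt_exp_smul_mulVec {ι : Type*} [Fintype ι] [DecidableEq ι] (A : Matrix ι ι ℝ)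
    (x : ι → ℝ) (t : ℝ) (i : ι) :
    HasDerivAt (fun s : ℝ => (NormedSpace.exp (s • A)).mulVec x i)
      (A.mulVec ((NormedSpace.exp (t • A)).mulVec x) i) t := by
  let L : Matrix ι ι ℝ →L[ℝ] ℝ :=
    LinearMap.toContinuousLinearMap (LinearMap.proj i ∘ₗ (Matrix.mulVecBilin ℝ ℝ).flip x)
  rw [Matrix.mulVec_mulVec]
  exact L.hasFDerivAt.comp_hasDerivAt t (hasDerivAt_exp_smul_const' A t)

end

namespace IsSphereMeasure

variable {n : ℕ} {σ : Measure (Fin n → ℝ)}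

theorem ae_mem_unitSphere (hσ : IsSphereMeasure n σ) : ∀ᵐ x ∂σ, x ∈ unitSphere n :=
  mem_ae_iff.2 hσ.onSphere

theorem memLp_of_continuous (hσ : IsSphereMeasure n σ) {F : (Fin n → ℝ) → ℝ} (hF : Continuous F)
    (p : ENNReal) : MemLp F p σ :=
  have := hσ.prob
  memLp_of_continuous_of_isCompact (isCompact_unitSphere n) hσ.onSphere hF p

theorem nonempty (hσ : IsSphereMeasure n σ) : Nonempty (Fin n) := by
  have := hσ.prob
  obtain ⟨x, hx⟩ := hσ.ae_mem_unitSphere.exists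
  by_contra h
  rw [not_nonempty_iff] at h
  simp [unitSphere] at hx

theorem integrable_eval (hσ : IsSphereMeasure n σ) (p : MvPolynomial (Fin n) ℝ) :
    Integrable (fun x => eval x p) σ :=
  memLp_one_iff_integrable.1 (hσ.memLp_of_continuous p.continuous_eval 1)

theorem integral_comp_mulVec (hσ : IsSphereMeasure n σ) {Q : Matrix (Fin n) (Fin n) ℝ}
    (hQ : Q * Q.transpose = 1) (p : MvPolynomial (Fin n) ℝ) :
    ∫ x, eval (Q.mulVec x) p ∂σ = ∫ x, eval x p ∂σ := by
  conv_rhs => rw [← hσ.invariant Q hQ]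
  exact (integral_map (by fun_prop) p.continuous_eval.aestronglyMeasurable).symm

theorem integral_eval_derivation_eq_zero (hσ : IsSphereMeasure n σ) {A : Matrix (Fin n) (Fin n) ℝ}
    (hA : A.transpose = -A)
    {D : Derivation ℝ (MvPolynomial (Fin n) ℝ) (MvPolynomial (Fin n) ℝ)}
    (hD : ∀ x i, eval x (D (X i)) = A.mulVec x i) (p : MvPolynomial (Fin n) ℝ) :
    ∫ x, eval x (D p) ∂σ = 0 := by
  have := hσ.prob
  let O (t : ℝ) : Matrix (Fin n) (Fin n) ℝ := NormedSpace.exp (t • A)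
  have hO (t : ℝ) : O t * (O t).transpose = 1 := exp_smul_mul_transpose hA t
  obtain ⟨B, hB⟩ := (isCompact_unitSphere n).exists_bound_of_continuousOn
    (D p).continuous_eval.continuousOn
  have hmeas (t : ℝ) (q : MvPolynomial (Fin n) ℝ) :
      AEStronglyMeasurable (fun x => eval ((O t).mulVec x) q) σ :=
    (q.continuous_eval.comp (by fun_prop)).aestronglyMeasurable
  have hderiv : HasDerivAt (fun t => ∫ x, eval ((O t).mulVec x) p ∂σ)
      (∫ x, eval ((O 0).mulVec x) (D p) ∂σ) 0 := by
    refine (hasDerivAt_integral_of_dominated_loc_of_deriv_le Filter.univ_mem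
      (F' := fun t x => eval ((O t).mulVec x) (D p)) (bound := fun _ => B)
      (.of_forall fun t => hmeas t p) ?_ (hmeas 0 (D p)) ?_ (integrable_const B)
      (.of_forall fun x t _ => ?_)).2
    · simpa [O] using hσ.integrable_eval p
    · filter_upwards [hσ.ae_mem_unitSphere] with x hx t _
      exact hB _ (mulVec_mem_unitSphere (hO t) hx)
    · refine hasDerivAt_eval_of_derivation D (fun i => ?_) p
      rw [hD]
      exact hasDerivAt_exp_smul_mulVec A x t i
  simp only [hσ.integral_comp_mulVec (hO _)] at hderiv
  exact hderiv.unique (hasDerivAt_const 0 _)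

theorem integral_eval_rotation_eq_zero (hσ : IsSphereMeasure n σ) (i j : Fin n)
    (p : MvPolynomial (Fin n) ℝ) : ∫ x, eval x (X i * pderiv j p - X j * pderiv i p) ∂σ = 0 := by
  have hA : (Matrix.single j i (1 : ℝ) - Matrix.single i j 1).transpose =
      -(Matrix.single j i 1 - Matrix.single i j 1) := by
    rw [Matrix.transpose_sub, Matrix.transpose_single, Matrix.transpose_single, neg_sub]
  refine hσ.integral_eval_derivation_eq_zero hA
    (D := (X i : MvPolynomial (Fin n) ℝ) • pderiv j - (X j : MvPolynomial (Fin n) ℝ) • pderiv i)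
    (fun x k => ?_) p
  simp [Matrix.sub_mulVec, Matrix.single_mulVec, pderiv_X, Pi.single_apply, Function.update_apply,
    apply_ite (eval x), eq_comm]

theorem integral_eval_sum (hσ : IsSphereMeasure n σ) {ι : Type*} (s : Finset ι)
    (p : ι → MvPolynomial (Fin n) ℝ) :
    ∫ x, eval x (∑ i ∈ s, p i) ∂σ = ∑ i ∈ s, ∫ x, eval x (p i) ∂σ := by
  simp only [map_sum]
  exact integral_finsetSum _ fun i _ => hσ.integrable_eval _

theorem integral_eval_laplacian (hσ : IsSphereMeasure n σ) {p : MvPolynomial (Fin n) ℝ} {k : ℕ}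
    (hp : p.IsHomogeneous k) :
    ∫ x, eval x (laplacian p) ∂σ = k * (k + n - 2) * ∫ x, eval x p ∂σ := by
  have hrot : ∫ x, eval x ((k * (k + n - 2) : MvPolynomial (Fin n) ℝ) * p -
      normSq (Fin n) ℝ * laplacian p) ∂σ = 0 := by
    have h := sum_X_mul_pderiv_rotation hp
    rw [Fintype.card_fin] at h
    rw [← h]
    simp only [hσ.integral_eval_sum, hσ.integral_eval_rotation_eq_zero, Finset.sum_const_zero]
  have hlap : ∫ x, eval x (normSq (Fin n) ℝ * laplacian p) ∂σ = ∫ x, eval x (laplacian p) ∂σ := by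
    refine integral_congr_ae ?_
    filter_upwards [hσ.ae_mem_unitSphere] with x hx
    rw [map_mul, eval_normSq_of_mem_unitSphere hx, one_mul]
  simp only [map_sub] at hrot
  rw [integral_sub (hσ.integrable_eval _) (hσ.integrable_eval _), hlap, sub_eq_zero] at hrot
  rw [← hrot, ← integral_const_mul]
  simp

theorem integral_eval_mul_eq_zero (hσ : IsSphereMeasure n σ) {h q : MvPolynomial (Fin n) ℝ}
    {d e : ℕ} (hh : IsSolidHarmonic h d) (hq : q.IsHomogeneous e) (hed : e + 2 ≤ d) :
    ∫ x, eval x (h * q) ∂σ = 0 := by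
  obtain ⟨i₀⟩ := hσ.nonempty
  induction e using Nat.strong_induction_on generalizing d h q with
  | _ e ih =>
    have hlap : ∫ x, eval x (h * laplacian q) ∂σ = 0 := by
      rcases lt_or_ge e 2 with he | he
      · simp [laplacian_eq_zero_of_lt_two hq he]
      · exact ih (e - 2) (by omega) hh (isHomogeneous_laplacian hq) (by omega)
    have hgrad (i : Fin n) : ∫ x, eval x (pderiv i h * pderiv i q) ∂σ = 0 := by
      rcases e.eq_zero_or_pos with rfl | he
      · simp [pderiv_eq_zero_of_isHomogeneous_zero hq i]
      · exact ih (e - 1) (by omega) (hh.pderiv i) hq.pderiv (by omega)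
    have hzero : ∫ x, eval x (laplacian (h * q)) ∂σ = 0 := by
      rw [laplacian_mul, hh.laplacian_eq_zero, mul_zero, add_zero, Finset.mul_sum]
      simp only [map_add]
      rw [integral_add (hσ.integrable_eval _) (hσ.integrable_eval _), hlap, hσ.integral_eval_sum]
      simp only [map_mul (eval _) 2, map_ofNat, integral_const_mul, hgrad, mul_zero,
        Finset.sum_const_zero, add_zero]
    have hpos : (0 : ℝ) < (d + e : ℕ) * ((d + e : ℕ) + n - 2) := by
      have hd : (2 : ℝ) ≤ (d + e : ℕ) := by exact_mod_cast (by omega : 2 ≤ d + e)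
      have hn : (1 : ℝ) ≤ n := Nat.one_le_cast.2 i₀.pos
      exact mul_pos (by linarith) (by linarith)
    rw [hσ.integral_eval_laplacian (hh.isHomogeneous.mul hq)] at hzero
    exact (mul_eq_zero.1 hzero).resolve_left hpos.ne'

theorem sum_integral_sq_pderiv (hσ : IsSphereMeasure n σ) {h : MvPolynomial (Fin n) ℝ} {k : ℕ}
    (hh : IsSolidHarmonic h k) :
    ∑ i, ∫ x, eval x (pderiv i h) ^ 2 ∂σ = k * (2 * k + n - 2) * ∫ x, eval x h ^ 2 ∂σ := by
  have hlap := hσ.integral_eval_laplacian (hh.isHomogeneous.pow 2)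
  rw [hh.laplacian_sq, Finset.mul_sum, hσ.integral_eval_sum] at hlap
  simp only [map_mul, map_pow, map_ofNat, integral_const_mul, ← Finset.mul_sum] at hlap
  push_cast at hlap
  linarith

theorem three_mul_integral_sq_mul_sum_sq_pderiv (hσ : IsSphereMeasure n σ)
    {h : MvPolynomial (Fin n) ℝ} {k : ℕ} (hh : IsSolidHarmonic h k) :
    3 * ∫ x, eval x h ^ 2 * ∑ i, eval x (pderiv i h) ^ 2 ∂σ =
      k * (4 * k + n - 2) * ∫ x, eval x h ^ 4 ∂σ := by
  have hlap := hσ.integral_eval_laplacian (hh.isHomogeneous.pow 4)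
  rw [hh.laplacian_pow_four] at hlap
  simp only [map_mul, map_sum, map_pow, map_ofNat, integral_const_mul] at hlap
  push_cast at hlap
  linarith

theorem integral_sq_sum_sq_pderiv_le (hσ : IsSphereMeasure n σ) {h : MvPolynomial (Fin n) ℝ}
    {k : ℕ} {c : ℝ} (hh : IsSolidHarmonic h k)
    (hgrad : ∀ i, HasFourthMomentBound (fun x => eval x (pderiv i h)) σ c) :
    ∫ x, (∑ i, eval x (pderiv i h) ^ 2) ^ 2 ∂σ ≤
      (c * (k * (2 * k + n - 2) * ∫ x, eval x h ^ 2 ∂σ)) ^ 2 := by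
  rw [← hσ.sum_integral_sq_pderiv hh, Finset.mul_sum]
  simpa only [one_mul] using HasFourthMomentBound.integral_sq_sum_smul_sq_le Finset.univ
    (fun _ => zero_le_one' ℝ) hgrad

theorem sq_integral_sq_mul_sum_sq_pderiv_le (hσ : IsSphereMeasure n σ)
    {h : MvPolynomial (Fin n) ℝ} {k : ℕ} {c : ℝ} (hh : IsSolidHarmonic h k)
    (hgrad : ∀ i, HasFourthMomentBound (fun x => eval x (pderiv i h)) σ c) :
    (∫ x, eval x h ^ 2 * ∑ i, eval x (pderiv i h) ^ 2 ∂σ) ^ 2 ≤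
      (∫ x, eval x h ^ 4 ∂σ) * (c * (k * (2 * k + n - 2) * ∫ x, eval x h ^ 2 ∂σ)) ^ 2 := by
  have hmem (p : MvPolynomial (Fin n) ℝ) : MemLp (fun x => eval x p) 2 σ :=
    hσ.memLp_of_continuous p.continuous_eval 2
  have hcs := sq_integral_mul_le (hmem (h ^ 2)) (hmem (∑ i, pderiv i h ^ 2))
  simp only [map_pow, map_sum, ← pow_mul, Nat.reduceMul] at hcs
  exact hcs.trans (mul_le_mul_of_nonneg_left (hσ.integral_sq_sum_sq_pderiv_le hh hgrad)
    (integral_nonneg fun x => by positivity))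

theorem hasFourthMomentBound_of_pderiv (hσ : IsSphereMeasure n σ) {h : MvPolynomial (Fin n) ℝ}
    {k : ℕ} {c : ℝ} (hh : IsSolidHarmonic h k) (hk : 0 < k)
    (hgrad : ∀ i, HasFourthMomentBound (fun x => eval x (pderiv i h)) σ c) :
    HasFourthMomentBound (fun x => eval x h) σ (3 * c) := by
  obtain ⟨i₀⟩ := hσ.nonempty
  have hc := (hgrad i₀).pos
  refine ⟨hσ.memLp_of_continuous h.continuous_eval 4, by positivity, ?_⟩
  set A := ∫ x, eval x h ^ 4 ∂σ
  set B := ∫ x, eval x h ^ 2 ∂σ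
  have hA : 0 ≤ A := integral_nonneg fun x => by positivity
  have : 0 ≤ B := integral_nonneg fun x => sq_nonneg _
  have hk1 : (1 : ℝ) ≤ k := Nat.one_le_cast.2 hk
  have hn1 : (1 : ℝ) ≤ n := Nat.one_le_cast.2 i₀.pos
  have hcs : (∫ x, eval x h ^ 2 * ∑ i, eval x (pderiv i h) ^ 2 ∂σ) ^ 2 ≤
      A * (c * (k * (2 * k + n - 2) * B)) ^ 2 :=
    hσ.sq_integral_sq_mul_sum_sq_pderiv_le hh hgrad
  have hcoef : (k * (2 * k + n - 2) : ℝ) ^ 2 ≤ (k * (4 * k + n - 2)) ^ 2 := by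
    have : (0 : ℝ) ≤ 2 * k + n - 2 := by linarith
    gcongr
    norm_num
  have hkey : (k * (4 * k + n - 2)) ^ 2 * A * A ≤
      (k * (4 * k + n - 2)) ^ 2 * A * (3 * c * B) ^ 2 := by
    calc (k * (4 * k + n - 2)) ^ 2 * A * A = (k * (4 * k + n - 2) * A) ^ 2 := by ring
      _ = 9 * (∫ x, eval x h ^ 2 * ∑ i, eval x (pderiv i h) ^ 2 ∂σ) ^ 2 := by
          rw [← hσ.three_mul_integral_sq_mul_sum_sq_pderiv hh]
          ring
      _ ≤ 9 * (A * (c * (k * (2 * k + n - 2) * B)) ^ 2) := by gcongr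
      _ = (k * (2 * k + n - 2)) ^ 2 * (A * (3 * c * B) ^ 2) := by ring
      _ ≤ (k * (4 * k + n - 2)) ^ 2 * (A * (3 * c * B) ^ 2) := by gcongr
      _ = _ := (mul_assoc ..).symm
  rcases hA.eq_or_lt with h0 | h0
  · rw [← h0]
    positivity
  · have : (0 : ℝ) < 4 * k + n - 2 := by linarith
    exact le_of_mul_le_mul_left hkey (by positivity)

theorem hasFourthMomentBound_of_isSolidHarmonic (hσ : IsSphereMeasure n σ) {k : ℕ}
    {h : MvPolynomial (Fin n) ℝ} (hh : IsSolidHarmonic h k) :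
    HasFourthMomentBound (fun x => eval x h) σ (3 ^ k) := by
  induction k generalizing h with
  | zero =>
    have := hσ.prob
    refine ⟨hσ.memLp_of_continuous h.continuous_eval 4, by positivity, ?_⟩
    rw [totalDegree_eq_zero_iff_eq_C.1 (Nat.le_zero.1 hh.isHomogeneous.totalDegree_le)]
    simp [← pow_mul]
  | succ k ih =>
    rw [pow_succ']
    exact hσ.hasFourthMomentBound_of_pderiv hh k.succ_pos fun i => ih (hh.pderiv i)

theorem hasFourthMomentBound_of_isHomogeneous (hσ : IsSphereMeasure n σ) {k : ℕ}
    {p : MvPolynomial (Fin n) ℝ} (hp : p.IsHomogeneous k) :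
    HasFourthMomentBound (fun x => eval x p) σ (4 ^ k) := by
  have := hσ.prob
  have := hσ.nonempty
  induction k using Nat.strong_induction_on generalizing p with
  | _ k ih =>
    rcases lt_or_ge k 2 with hk | hk
    · exact (hσ.hasFourthMomentBound_of_isSolidHarmonic
        ⟨hp, laplacian_eq_zero_of_lt_two hp hk⟩).mono
          (pow_le_pow_left₀ (by norm_num) (by norm_num) k)
    · obtain ⟨k, rfl⟩ := Nat.exists_eq_add_of_le' hk
      obtain ⟨h, q, hh, hq, rfl⟩ := exists_isSolidHarmonic_add_normSq_mul hp
      have horth : ∫ x, eval x h * eval x q ∂σ = 0 := by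
        simpa only [map_mul] using hσ.integral_eval_mul_eq_zero hh hq le_rfl
      have hpow : (3 : ℝ) ^ (k + 2) + 4 ^ k ≤ 4 ^ (k + 2) := by
        have : (3 : ℝ) ^ k ≤ 4 ^ k := by gcongr; norm_num
        have : (0 : ℝ) < 4 ^ k := by positivity
        rw [pow_add, pow_add]
        linarith
      have hbound := ((hσ.hasFourthMomentBound_of_isSolidHarmonic hh).add_of_orthogonal
        (ih k (by omega) hq) horth).mono hpow
      refine hbound.congr ?_
      filter_upwards [hσ.ae_mem_unitSphere] with x hx
      simp [eval_normSq_of_mem_unitSphere hx]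

end IsSphereMeasure

end SphereMeasure

section Biforms

theorem isHomogeneous_bind₁_of_isWeightedHomogeneous {ι τ M R : Type*} [AddCommMonoid M]
    [CommSemiring R] {w : ι → M} {k : M} {p : MvPolynomial ι R} (hp : p.IsWeightedHomogeneous w k)
    (φ : M →+ ℕ) {ψ : ι → MvPolynomial τ R} (hψ : ∀ i, (ψ i).IsHomogeneous (φ (w i))) :
    (bind₁ ψ p).IsHomogeneous (φ k) := by
  rw [p.as_sum, map_sum]
  refine IsHomogeneous.sum _ _ _ fun d hd => ?_
  have hdeg : φ k = ∑ i ∈ d.support, φ (w i) * d i := by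
    rw [← hp (mem_support_iff.1 hd), Finsupp.weight_apply, map_finsuppSum, Finsupp.sum]
    simp only [map_nsmul, smul_eq_mul, mul_comm]
  rw [bind₁_monomial, ← zero_add (φ k), hdeg]
  exact (isHomogeneous_C _ _).mul (IsHomogeneous.prod _ _ _ fun i _ => (hψ i).pow _)

variable {n m k₁ k₂ : ℕ} {g : MvPolynomial (Fin n ⊕ Fin m) ℝ}

theorem exists_isHomogeneous_eval_eq_beval_left (hg : g ∈ Biform n m k₁ k₂) (y : Fin m → ℝ) :
    ∃ p : MvPolynomial (Fin n) ℝ, p.IsHomogeneous k₁ ∧ ∀ x, eval x p = beval g x y := by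
  refine ⟨bind₁ (Sum.elim X (C ∘ y)) g,
    isHomogeneous_bind₁_of_isWeightedHomogeneous hg (AddMonoidHom.fst ℕ ℕ) ?_, fun x => ?_⟩
  · rintro (i | j)
    exacts [isHomogeneous_X _ _, isHomogeneous_C _ _]
  · rw [beval, eval, eval₂Hom_bind₁]
    congr 2 with (i | j) <;> simp

theorem exists_isHomogeneous_eval_eq_beval_right (hg : g ∈ Biform n m k₁ k₂) (x : Fin n → ℝ) :
    ∃ p : MvPolynomial (Fin m) ℝ, p.IsHomogeneous k₂ ∧ ∀ y, eval y p = beval g x y := by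
  refine ⟨bind₁ (Sum.elim (C ∘ x) X) g,
    isHomogeneous_bind₁_of_isWeightedHomogeneous hg (AddMonoidHom.snd ℕ ℕ) ?_, fun y => ?_⟩
  · rintro (i | j)
    exacts [isHomogeneous_C _ _, isHomogeneous_X _ _]
  · rw [beval, eval, eval₂Hom_bind₁]
    congr 2 with (i | j) <;> simp

theorem continuous_beval (g : MvPolynomial (Fin n ⊕ Fin m) ℝ) :
    Continuous fun z : (Fin n → ℝ) × (Fin m → ℝ) => beval g z.1 z.2 := by
  refine g.continuous_eval.comp (continuous_pi ?_)
  rintro (i | j) <;> simp only [Sum.elim_inl, Sum.elim_inr] <;> fun_prop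

variable {σ₁ : Measure (Fin n → ℝ)} {σ₂ : Measure (Fin m → ℝ)}

theorem memLp_beval (hσ₁ : IsSphereMeasure n σ₁) (hσ₂ : IsSphereMeasure m σ₂)
    (g : MvPolynomial (Fin n ⊕ Fin m) ℝ) (p : ENNReal) :
    MemLp (fun z : (Fin n → ℝ) × (Fin m → ℝ) => beval g z.1 z.2) p (σ₁.prod σ₂) := by
  have := hσ₁.prob
  have := hσ₂.prob
  refine memLp_of_continuous_of_isCompact ((isCompact_unitSphere n).prod (isCompact_unitSphere m))
    (mem_ae_iff.1 ?_) (continuous_beval g) p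
  filter_upwards [Measure.quasiMeasurePreserving_fst.ae hσ₁.ae_mem_unitSphere,
    Measure.quasiMeasurePreserving_snd.ae hσ₂.ae_mem_unitSphere] with z hx hy
  exact ⟨hx, hy⟩

theorem hasFourthMomentBound_beval (hσ₁ : IsSphereMeasure n σ₁) (hσ₂ : IsSphereMeasure m σ₂)
    (hg : g ∈ Biform n m k₁ k₂) :
    HasFourthMomentBound (fun z : (Fin n → ℝ) × (Fin m → ℝ) => beval g z.1 z.2) (σ₁.prod σ₂)
      (4 ^ (k₁ + k₂)) := by
  have := hσ₁.prob
  have := hσ₂.prob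
  rw [pow_add]
  refine .prod (memLp_beval hσ₁ hσ₂ g 4) (fun y => ?_) fun x => ?_
  · obtain ⟨p, hp, heval⟩ := exists_isHomogeneous_eval_eq_beval_left hg y
    simpa only [heval] using hσ₁.hasFourthMomentBound_of_isHomogeneous hp
  · obtain ⟨p, hp, heval⟩ := exists_isHomogeneous_eval_eq_beval_right hg x
    simpa only [heval] using hσ₂.hasFourthMomentBound_of_isHomogeneous hp

end Biforms

end BiformPaper

open BiformPaper in
/-- **Lemma (reverse Hölder inequality for biforms).** For every biform
`g ∈ ℝ[x,y]_{k₁,k₂}` of bidegree `(k₁,k₂)`: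
`(∫_T g² dσ)^{1/2} ≤ 4^{k₁+k₂} · ∫_T |g| dσ`, i.e. `‖g‖₂ ≤ 4^{k₁+k₂}·‖g‖₁`. -/
theorem statement13 (n m k₁ k₂ : ℕ) (hn : 0 < n) (hm : 0 < m) (hk₁ : 0 < k₁) (hk₂ : 0 < k₂)
    (σ₁ : Measure (Fin n → ℝ)) (σ₂ : Measure (Fin m → ℝ))
    (hσ₁ : IsSphereMeasure n σ₁) (hσ₂ : IsSphereMeasure m σ₂)
    (g : MvPolynomial (Fin n ⊕ Fin m) ℝ) (hg : g ∈ Biform n m k₁ k₂) :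
    Real.sqrt (∫ x, ∫ y, beval g x y ^ 2 ∂σ₂ ∂σ₁) ≤
      (4 : ℝ) ^ (k₁ + k₂) * ∫ x, ∫ y, |beval g x y| ∂σ₂ ∂σ₁ := by
  have := hσ₁.prob
  have := hσ₂.prob
  have hbound := hasFourthMomentBound_beval hσ₁ hσ₂ hg
  have habs : Integrable (fun z : (Fin n → ℝ) × (Fin m → ℝ) => |beval g z.1 z.2|) (σ₁.prod σ₂) :=
    (memLp_one_iff_integrable.1 (memLp_beval hσ₁ hσ₂ g 1)).abs
  rw [integral_integral hbound.integrable_sq, integral_integral habs]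
  exact hbound.sqrt_integral_sq_le
end
end

section
/- A linear map Φ : 𝕊_n → 𝕊_m is completely positive if and only if the associated biform p_Φ(x,y) = yᵀ·Φ(x·xᵀ)·y is a finite sum of squares of real polynomials in the variables x₁,…,x_n, y₁,…,y_m. -/
open MeasureTheory Matrix

noncomputable section

namespace PosMapPaper

/-- The real vector space `𝕊_n` of symmetric `n × n` real matrices. -/
def Sym (n : ℕ) : Submodule ℝ (Matrix (Fin n) (Fin n) ℝ) where
  carrier := {A | A.IsSymm}
  add_mem' := fun ha hb => ha.add hb
  zero_mem' := Matrix.isSymm_zero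
  smul_mem' := fun c _ hA => hA.smul c

/-- A linear map `Φ : 𝕊_n → 𝕊_m` is positive if it maps positive semidefinite matrices
to positive semidefinite matrices. -/
def IsPositiveMap {n m : ℕ} (Φ : Sym n →ₗ[ℝ] Sym m) : Prop :=
  ∀ A : Sym n, Matrix.PosSemidef (A : Matrix (Fin n) (Fin n) ℝ) →
    Matrix.PosSemidef (Φ A : Matrix (Fin m) (Fin m) ℝ)

/-- A linear map `Φ : 𝕊_n → 𝕊_m` is completely positive if for every `k ≥ 1` the
ampliation `Φ^{(k)} : M_k(ℝ) ⊗ 𝕊_n → M_k(ℝ) ⊗ 𝕊_m`, `M ⊗ A ↦ M ⊗ Φ(A)`, is positive.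
Here elements of `M_k(ℝ) ⊗ 𝕊_n` are identified (via the Kronecker product) with `k × k`
block matrices whose `(a,b)` block is the symmetric matrix `S a b`. -/
def IsCPMap {n m : ℕ} (Φ : Sym n →ₗ[ℝ] Sym m) : Prop :=
  ∀ (k : ℕ) (S : Fin k → Fin k → Sym n),
    Matrix.PosSemidef (Matrix.of fun p q : Fin k × Fin n =>
      (S p.1 q.1 : Matrix (Fin n) (Fin n) ℝ) p.2 q.2) →
    Matrix.PosSemidef (Matrix.of fun p q : Fin k × Fin m =>
      (Φ (S p.1 q.1) : Matrix (Fin m) (Fin m) ℝ) p.2 q.2)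

lemma vecMulVec_isSymm {n : ℕ} (x : Fin n → ℝ) : (Matrix.vecMulVec x x).IsSymm := by
  ext i j
  simp [Matrix.vecMulVec_apply, mul_comm]

/-- The rank-one symmetric matrix `x·xᵀ`. -/
def xxT {n : ℕ} (x : Fin n → ℝ) : Sym n := ⟨Matrix.vecMulVec x x, vecMulVec_isSymm x⟩

/-- The biform `p_Φ(x, y) = yᵀ · Φ(x·xᵀ) · y` associated to `Φ : 𝕊_n → 𝕊_m`. -/
def pPhi {n m : ℕ} (Φ : Sym n →ₗ[ℝ] Sym m) (x : Fin n → ℝ) (y : Fin m → ℝ) : ℝ :=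
  y ⬝ᵥ ((Φ (xxT x) : Matrix (Fin m) (Fin m) ℝ) *ᵥ y)

end PosMapPaper

/-!
Both properties are equivalent to `Φ` having a Kraus form `A ↦ ∑ i, Vᵢ A Vᵢᵀ`, whose biform is
`∑ i, (yᵀ Vᵢ x)²`.

If `Φ` is completely positive, then `M ↦ ∑ a b, Φ(M_ab)_ab` is a nonnegative functional on the
positive semidefinite matrices with symmetric blocks `M_ab`. The Riesz extension theorem extends it
to a functional on all block matrices that is nonnegative on the matrices `z zᵀ`. On these it is a
nonnegative quadratic form in `z`, hence a sum of squares of linear forms, and `z = y ⊗ x` gives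
`p_Φ` as a sum of squares of bilinear forms.

Conversely, if `p_Φ = ∑ i, qᵢ²`, then restricting to lines through `x = 0`, where `p_Φ` is exactly
quadratic, shows that each `qᵢ` can be replaced by its derivative in `x` at `x = 0`, and then
similarly in `y`. This makes the `qᵢ` bilinear forms, and `Φ` is recovered from `p_Φ` because the
matrices `x xᵀ` span `𝕊_n`.
-/

open scoped Kronecker

namespace PosMapPaper

section SymmetricMatrices

variable {ι κ : Type*} [Fintype ι]

lemma isSymm_mul_mul_transpose {R : Type*} [CommSemiring R] {A : Matrix ι ι R}
    (hA : A.IsSymm) (V : Matrix κ ι R) :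
    (V * A * Vᵀ).IsSymm := by
  rw [IsSymm, transpose_mul, transpose_mul, transpose_transpose, hA.eq, Matrix.mul_assoc]

lemma eq_of_isSymm_of_dotProduct_mulVec_eq {K : Type*} [Field K] [NeZero (2 : K)]
    {A B : Matrix ι ι K} (hA : A.IsSymm) (hB : B.IsSymm)
    (h : ∀ v, v ⬝ᵥ (A *ᵥ v) = v ⬝ᵥ (B *ᵥ v)) : A = B := by
  classical
  refine toBilin'.injective ?_
  refine LinearMap.BilinForm.ext_of_isSymm (isSymm_toBilin'_iff_isSymm.mpr hA)
    (isSymm_toBilin'_iff_isSymm.mpr hB) fun v => ?_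
  rw [toBilin'_apply', toBilin'_apply', h]

end SymmetricMatrices

section QuadraticForms

variable {ι : Type*} [Fintype ι]

lemma posSemidef_add_transpose {M : Matrix ι ι ℝ} (hM : ∀ v, 0 ≤ v ⬝ᵥ (M *ᵥ v)) :
    (M + Mᵀ).PosSemidef := by
  refine .of_dotProduct_mulVec_nonneg (isSymm_add_transpose_self M) fun v => ?_
  rw [star_trivial, add_mulVec, dotProduct_add, dotProduct_transpose_mulVec]
  exact add_nonneg (hM v) (hM v)

lemma exists_dotProduct_mulVec_eq_sum_sq {M : Matrix ι ι ℝ} (hM : ∀ v, 0 ≤ v ⬝ᵥ (M *ᵥ v)) :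
    ∃ (N : ℕ) (w : Fin N → ι → ℝ), ∀ v, v ⬝ᵥ (M *ᵥ v) = ∑ i, (w i ⬝ᵥ v) ^ 2 := by
  have hpsd : ((1 / 2 : ℝ) • (M + Mᵀ)).PosSemidef :=
    (posSemidef_add_transpose hM).smul (by norm_num)
  obtain ⟨N, w, hw⟩ := posSemidef_iff_eq_sum_vecMulVec.mp hpsd
  refine ⟨N, w, fun v => ?_⟩
  calc v ⬝ᵥ (M *ᵥ v) = v ⬝ᵥ (((1 / 2 : ℝ) • (M + Mᵀ)) *ᵥ v) := by
        rw [smul_mulVec, dotProduct_smul, add_mulVec, dotProduct_add, dotProduct_transpose_mulVec,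
          smul_eq_mul]
        ring
    _ = ∑ i, (w i ⬝ᵥ v) ^ 2 := by
        rw [hw, sum_mulVec, dotProduct_sum]
        refine Finset.sum_congr rfl fun i _ => ?_
        rw [vecMulVec_mulVec, star_trivial, dotProduct_smul, dotProduct_comm v,
          MulOpposite.smul_eq_mul_unop, MulOpposite.unop_op, sq]

lemma exists_map_vecMulVec_self_eq_sum_sq {g : Matrix ι ι ℝ →ₗ[ℝ] ℝ}
    (hg : ∀ z, 0 ≤ g (vecMulVec z z)) :
    ∃ (N : ℕ) (w : Fin N → ι → ℝ), ∀ z, g (vecMulVec z z) = ∑ i, (w i ⬝ᵥ z) ^ 2 := by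
  classical
  let B : (ι → ℝ) →ₗ[ℝ] (ι → ℝ) →ₗ[ℝ] ℝ := (vecMulVecBilin ℝ ℝ).compr₂ g
  have hB (z : ι → ℝ) : g (vecMulVec z z) = z ⬝ᵥ (LinearMap.toMatrix₂' ℝ B *ᵥ z) := by
    rw [← toLinearMap₂'_apply', toLinearMap₂'_toMatrix']
    rfl
  simp only [hB] at hg ⊢
  exact exists_dotProduct_mulVec_eq_sum_sq hg

lemma exists_dotProduct_smul_one_add_mulVec_nonneg [DecidableEq ι] (M : Matrix ι ι ℝ) :
    ∃ c : ℝ, ∀ v, 0 ≤ v ⬝ᵥ ((c • (1 : Matrix ι ι ℝ) + M) *ᵥ v) := by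
  let T := toEuclideanCLM (n := ι) (𝕜 := ℝ) M
  refine ⟨‖T‖, fun v => ?_⟩
  let u : EuclideanSpace ℝ ι := WithLp.toLp 2 v
  have hbound : |v ⬝ᵥ (M *ᵥ v)| ≤ ‖T‖ * (v ⬝ᵥ v) :=
    calc |v ⬝ᵥ (M *ᵥ v)| = |inner ℝ u (T u)| := by rw [inner_toEuclideanCLM]
      _ ≤ ‖u‖ * (‖T‖ * ‖u‖) :=
        (abs_real_inner_le_norm u (T u)).trans (by gcongr; exact T.le_opNorm u)
      _ = ‖T‖ * inner ℝ u u := by rw [real_inner_self_eq_norm_sq]; ring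
      _ = ‖T‖ * (v ⬝ᵥ v) := by rw [EuclideanSpace.inner_toLp_toLp, star_trivial]
  rw [add_mulVec, smul_mulVec, one_mulVec, dotProduct_add, dotProduct_smul, smul_eq_mul]
  linarith [neg_abs_le (v ⬝ᵥ (M *ᵥ v))]

variable (ι) in
/-- The cone of square matrices `M` with `0 ≤ vᵀ M v` for all `v`. Unlike for `Matrix.PosSemidef`,
`M` need not be symmetric; this makes every matrix absorbed by multiples of the identity. -/
def nonnegFormCone : PointedCone ℝ (Matrix ι ι ℝ) where
  carrier := {M | ∀ v, 0 ≤ v ⬝ᵥ (M *ᵥ v)}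
  add_mem' hA hB v := by
    rw [add_mulVec, dotProduct_add]
    exact add_nonneg (hA v) (hB v)
  zero_mem' := by simp
  smul_mem' c A hA v := by
    rw [← Nonneg.coe_smul, smul_mulVec, dotProduct_smul]
    exact mul_nonneg c.2 (hA v)

lemma vecMulVec_self_mem_nonnegFormCone (z : ι → ℝ) : vecMulVec z z ∈ nonnegFormCone ι := by
  intro v
  simpa using (posSemidef_vecMulVec_self_star z).dotProduct_mulVec_nonneg v

end QuadraticForms

section Biform

variable {n m : ℕ} (Φ : Sym n →ₗ[ℝ] Sym m)

lemma xxT_smul (s : ℝ) (x : Fin n → ℝ) : xxT (s • x) = s ^ 2 • xxT x := by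
  ext i j
  simp only [xxT, vecMulVec_smul, smul_vecMulVec, smul_smul, Submodule.coe_smul, sq]

lemma pPhi_smul_left (s : ℝ) (x : Fin n → ℝ) (y : Fin m → ℝ) :
    pPhi Φ (s • x) y = s ^ 2 * pPhi Φ x y := by
  simp [pPhi, xxT_smul, smul_mulVec]

lemma pPhi_smul_right (s : ℝ) (x : Fin n → ℝ) (y : Fin m → ℝ) :
    pPhi Φ x (s • y) = s ^ 2 * pPhi Φ x y := by
  simp only [pPhi, mulVec_smul, smul_dotProduct, dotProduct_smul, smul_eq_mul]
  ring

lemma mem_span_range_xxT_of_posSemidef {A : Sym n} (hA : A.1.PosSemidef) :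
    A ∈ Submodule.span ℝ (Set.range (xxT (n := n))) := by
  obtain ⟨N, v, hv⟩ := posSemidef_iff_eq_sum_vecMulVec.mp hA
  have hsum : A = ∑ i, xxT (v i) := by
    ext1
    simpa [xxT] using hv
  rw [hsum]
  exact Submodule.sum_mem _ fun i _ => Submodule.subset_span ⟨v i, rfl⟩

lemma span_range_xxT : Submodule.span ℝ (Set.range (xxT (n := n))) = ⊤ := by
  refine Submodule.eq_top_iff'.mpr fun A => ?_
  obtain ⟨c, hc⟩ := exists_dotProduct_smul_one_add_mulVec_nonneg A.1
  let I : Sym n := ⟨1, isSymm_one⟩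
  have hI : I ∈ Submodule.span ℝ (Set.range (xxT (n := n))) :=
    mem_span_range_xxT_of_posSemidef .one
  have hcA : c • I + A ∈ Submodule.span ℝ (Set.range (xxT (n := n))) :=
    mem_span_range_xxT_of_posSemidef (.of_dotProduct_mulVec_nonneg (c • I + A).2 hc)
  exact (Submodule.add_mem_iff_right _ (Submodule.smul_mem _ c hI)).mp hcA

variable {Φ} in
lemma eq_of_pPhi_eq {Ψ : Sym n →ₗ[ℝ] Sym m} (h : ∀ x y, pPhi Φ x y = pPhi Ψ x y) : Φ = Ψ :=
  LinearMap.ext_on_range span_range_xxT fun x =>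
    Subtype.ext <| eq_of_isSymm_of_dotProduct_mulVec_eq (Φ (xxT x)).2 (Ψ (xxT x)).2 (h x)

end Biform

section KrausMap

variable {n m : ℕ} {ι : Type*} [Fintype ι]

/-- The map `A ↦ ∑ i, Vᵢ A Vᵢᵀ` on symmetric matrices with Kraus operators `Vᵢ`. -/
def krausMap (V : ι → Matrix (Fin m) (Fin n) ℝ) : Sym n →ₗ[ℝ] Sym m where
  toFun A := ⟨∑ i, V i * A.1 * (V i)ᵀ,
    Submodule.sum_mem (Sym m) fun i _ => isSymm_mul_mul_transpose A.2 (V i)⟩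
  map_add' A B := by
    ext1
    simp [Matrix.mul_add, Matrix.add_mul, Finset.sum_add_distrib]
  map_smul' c A := by
    ext1
    simp [Finset.smul_sum]

lemma pPhi_krausMap (V : ι → Matrix (Fin m) (Fin n) ℝ) (x : Fin n → ℝ) (y : Fin m → ℝ) :
    pPhi (krausMap V) x y = ∑ i, (y ⬝ᵥ (V i *ᵥ x)) ^ 2 := by
  simp only [pPhi, krausMap, xxT, LinearMap.coe_mk, AddHom.coe_mk, sum_mulVec, dotProduct_sum]
  refine Finset.sum_congr rfl fun i _ => ?_
  rw [mul_vecMulVec, vecMulVec_mul, vecMul_transpose, vecMulVec_mulVec, dotProduct_comm _ y,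
    dotProduct_smul, MulOpposite.smul_eq_mul_unop, MulOpposite.unop_op, sq]

lemma isCPMap_krausMap (V : ι → Matrix (Fin m) (Fin n) ℝ) : IsCPMap (krausMap V) := by
  intro k S hS
  convert posSemidef_sum Finset.univ fun i _ =>
    hS.mul_mul_conjTranspose_same ((1 : Matrix (Fin k) (Fin k) ℝ) ⊗ₖ V i) using 1
  ext ⟨a, r⟩ ⟨b, s⟩
  simp [krausMap, Matrix.sum_apply, Matrix.mul_apply, Fintype.sum_prod_type, one_apply, ite_mul]

end KrausMap

section Ampliation

variable {k n m : ℕ} (Φ : Sym n →ₗ[ℝ] Sym m)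

variable (k n) in
/-- The space `M_k(ℝ) ⊗ 𝕊_n`, realized as the `k × k` block matrices with blocks in `𝕊_n`. -/
def symBlocks : Submodule ℝ (Matrix (Fin k × Fin n) (Fin k × Fin n) ℝ) where
  carrier := {M | ∀ a b i j, M (a, i) (b, j) = M (a, j) (b, i)}
  add_mem' hA hB a b i j := by simp [hA a b i j, hB a b i j]
  zero_mem' := by simp
  smul_mem' c A hA a b i j := by simp [hA a b i j]

lemma kronecker_mem_symBlocks (B : Matrix (Fin k) (Fin k) ℝ) (A : Sym n) :
    B ⊗ₖ A.1 ∈ symBlocks k n := fun a b i j => by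
  rw [kronecker_apply, kronecker_apply, A.2.apply]

lemma transpose_mem_symBlocks {M : Matrix (Fin k × Fin n) (Fin k × Fin n) ℝ}
    (hM : M ∈ symBlocks k n) : Mᵀ ∈ symBlocks k n := fun a b i j => hM b a j i

/-- The `(a, b)` block of a matrix with symmetric blocks. -/
def symBlock (a b : Fin k) : symBlocks k n →ₗ[ℝ] Sym n where
  toFun M := ⟨of fun i j => M.1 (a, i) (b, j), by ext i j; exact M.2 a b j i⟩
  map_add' _ _ := rfl
  map_smul' _ _ := rfl

variable (k) in
/-- The ampliation `Φ^{(k)}`, acting on block matrices by applying `Φ` to each block. -/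
def ampliation : symBlocks k n →ₗ[ℝ] Matrix (Fin k × Fin m) (Fin k × Fin m) ℝ where
  toFun M := of fun p q => (Φ (symBlock p.1 q.1 M)).1 p.2 q.2
  map_add' _ _ := by ext; simp
  map_smul' _ _ := by ext; simp

lemma ampliation_kronecker (B : Matrix (Fin k) (Fin k) ℝ) (A : Sym n) :
    ampliation k Φ ⟨B ⊗ₖ A.1, kronecker_mem_symBlocks B A⟩ = B ⊗ₖ (Φ A).1 := by
  ext ⟨a, r⟩ ⟨b, s⟩
  have hblock : symBlock a b ⟨B ⊗ₖ A.1, kronecker_mem_symBlocks B A⟩ = B a b • A := rfl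
  simp [ampliation, hblock]

lemma ampliation_transpose (M : symBlocks k n) :
    ampliation k Φ ⟨M.1ᵀ, transpose_mem_symBlocks M.2⟩ = (ampliation k Φ M)ᵀ := by
  ext ⟨a, r⟩ ⟨b, s⟩
  have hblock : symBlock a b ⟨M.1ᵀ, transpose_mem_symBlocks M.2⟩ = symBlock b a M := by
    ext i j
    exact M.2 b a j i
  simp only [ampliation, LinearMap.coe_mk, AddHom.coe_mk, of_apply, transpose_apply, hblock]
  exact (Φ (symBlock b a M)).2.apply s r

variable {Φ}

lemma IsCPMap.posSemidef_ampliation (hΦ : IsCPMap Φ) {M : symBlocks k n} (hM : M.1.PosSemidef) :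
    (ampliation k Φ M).PosSemidef :=
  hΦ k (fun a b => symBlock a b M) hM

lemma IsCPMap.dotProduct_ampliation_mulVec_nonneg (hΦ : IsCPMap Φ) {M : symBlocks k n}
    (hM : M.1 ∈ nonnegFormCone (Fin k × Fin n)) (w : Fin k × Fin m → ℝ) :
    0 ≤ w ⬝ᵥ (ampliation k Φ M *ᵥ w) := by
  have hpsd := hΦ.posSemidef_ampliation
    (M := M + ⟨M.1ᵀ, transpose_mem_symBlocks M.2⟩) (posSemidef_add_transpose hM)
  have h := hpsd.dotProduct_mulVec_nonneg w
  rw [map_add, ampliation_transpose, star_trivial, add_mulVec, dotProduct_add,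
    dotProduct_transpose_mulVec] at h
  linarith

end Ampliation

section Choi

variable {n m : ℕ} {Φ : Sym n →ₗ[ℝ] Sym m}

variable (Φ) in
/-- The functional `M ↦ ∑ a b, Φ(M_ab)_ab` on the matrices with symmetric blocks `M_ab`, dual to
the Choi matrix of `Φ`. It is written as the value of the quadratic form of `Φ^{(m)}(M)` at
`vec 1 = ∑ a, e_a ⊗ e_a`. -/
def choiFunctional : symBlocks m n →ₗ[ℝ] ℝ where
  toFun M := vec 1 ⬝ᵥ (ampliation m Φ M *ᵥ vec 1)
  map_add' _ _ := by rw [map_add, add_mulVec, dotProduct_add]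
  map_smul' _ _ := by rw [map_smul, smul_mulVec, dotProduct_smul, RingHom.id_apply]

lemma choiFunctional_kronecker_xxT (x : Fin n → ℝ) (y : Fin m → ℝ) :
    choiFunctional Φ ⟨vecMulVec y y ⊗ₖ (xxT x).1, kronecker_mem_symBlocks _ _⟩ = pPhi Φ x y := by
  simp only [choiFunctional, LinearMap.coe_mk, AddHom.coe_mk, ampliation_kronecker,
    kronecker_mulVec_vec, vec_dotProduct_vec, transpose_one, Matrix.mul_one,
    transpose_vecMulVec, mul_vecMulVec, trace_vecMulVec]
  rw [one_mulVec, dotProduct_comm, pPhi]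

lemma IsCPMap.exists_extension_choiFunctional (hΦ : IsCPMap Φ) :
    ∃ g : Matrix (Fin m × Fin n) (Fin m × Fin n) ℝ →ₗ[ℝ] ℝ,
      (∀ M : symBlocks m n, g M = choiFunctional Φ M) ∧
        ∀ M ∈ nonnegFormCone (Fin m × Fin n), 0 ≤ g M := by
  refine riesz_extension (nonnegFormCone _) ⟨symBlocks m n, choiFunctional Φ⟩
    (fun M hM => hΦ.dotProduct_ampliation_mulVec_nonneg hM _) fun M => ?_
  have one_mem : (1 : Matrix (Fin m × Fin n) (Fin m × Fin n) ℝ) ∈ symBlocks m n := by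
    rw [← one_kronecker_one]
    exact kronecker_mem_symBlocks 1 ⟨1, isSymm_one⟩
  obtain ⟨c, hc⟩ := exists_dotProduct_smul_one_add_mulVec_nonneg M
  exact ⟨⟨c • 1, Submodule.smul_mem _ c one_mem⟩, hc⟩

lemma IsCPMap.exists_pPhi_eq_sum_sq (hΦ : IsCPMap Φ) :
    ∃ (N : ℕ) (V : Fin N → Matrix (Fin m) (Fin n) ℝ),
      ∀ x y, pPhi Φ x y = ∑ i, (y ⬝ᵥ (V i *ᵥ x)) ^ 2 := by
  obtain ⟨g, hg_ext, hg_nonneg⟩ := hΦ.exists_extension_choiFunctional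
  obtain ⟨N, w, hw⟩ := exists_map_vecMulVec_self_eq_sum_sq fun z =>
    hg_nonneg _ (vecMulVec_self_mem_nonnegFormCone z)
  refine ⟨N, fun i => of fun a j => w i (a, j), fun x y => ?_⟩
  let z : Fin m × Fin n → ℝ := fun p => y p.1 * x p.2
  have hz : vecMulVec z z = vecMulVec y y ⊗ₖ (xxT x).1 := by
    ext p q
    exact mul_mul_mul_comm _ _ _ _
  calc pPhi Φ x y = g (vecMulVec z z) := by rw [hz, ← choiFunctional_kronecker_xxT, ← hg_ext]
    _ = ∑ i, (w i ⬝ᵥ z) ^ 2 := hw z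
    _ = _ := by
      refine Finset.sum_congr rfl fun i _ => congrArg (· ^ 2) ?_
      simp only [dotProduct, mulVec, Fintype.sum_prod_type, Finset.mul_sum, of_apply, z]
      exact Finset.sum_congr rfl fun a _ => Finset.sum_congr rfl fun j _ => by ring

end Choi

section DirectionalDerivative

variable {σ : Type*}

/-- The derivative of polynomials in the direction of the vector `v`. -/
def dirDeriv {R : Type*} [CommSemiring R] (v : σ → R) :
    Derivation R (MvPolynomial σ R) (MvPolynomial σ R) :=
  MvPolynomial.mkDerivation R fun k => MvPolynomial.C (v k)

lemma dirDeriv_apply {R : Type*} [CommSemiring R] [Fintype σ] (v : σ → R)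
    (p : MvPolynomial σ R) : dirDeriv v p = ∑ k, v k • MvPolynomial.pderiv k p := by
  classical
  have sum_apply (q : MvPolynomial σ R) :
      (∑ k, v k • MvPolynomial.pderiv k) q = ∑ k, v k • MvPolynomial.pderiv k q := by
    simp only [← Derivation.coeFnAddMonoidHom_apply, map_sum, Finset.sum_apply]
    rfl
  have heq : dirDeriv v = ∑ k, v k • MvPolynomial.pderiv k :=
    MvPolynomial.derivation_ext fun i => by
      simp [sum_apply, dirDeriv, MvPolynomial.pderiv_X, Pi.single_apply, MvPolynomial.smul_eq_C_mul]
  rw [heq, sum_apply]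

lemma hasDerivAt_eval_add_smul {𝕜 : Type*} [NontriviallyNormedField 𝕜] (p : MvPolynomial σ 𝕜)
    (a v : σ → 𝕜) (s : 𝕜) :
    HasDerivAt (fun s : 𝕜 => MvPolynomial.eval (a + s • v) p)
      (MvPolynomial.eval (a + s • v) (dirDeriv v p)) s := by
  induction p using MvPolynomial.induction_on with
  | C c => simpa [dirDeriv] using hasDerivAt_const s c
  | add p q hp hq => simpa using hp.fun_add hq
  | mul_X p i hp =>
    have hX : HasDerivAt (fun s : 𝕜 => (a + s • v) i) (v i) s := by
      simpa using ((hasDerivAt_id s).mul_const (v i)).const_add (a i)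
    simpa [dirDeriv, mul_comm, add_comm] using hp.fun_mul hX

lemma sum_deriv_sq_eq {ι : Type*} [Fintype ι] {f : ι → ℝ → ℝ} {f' : ι → ℝ} {c : ℝ}
    (hf : ∀ i, HasDerivAt (f i) (f' i) 0) (h : ∀ s, s ^ 2 * c = ∑ i, f i s ^ 2) :
    c = ∑ i, f' i ^ 2 := by
  have hf0 (i : ι) : f i 0 = 0 := by
    have hsum : ∑ i, f i 0 ^ 2 = 0 := by rw [← h 0]; ring
    exact pow_eq_zero_iff two_ne_zero |>.mp <|
      (Finset.sum_eq_zero_iff_of_nonneg fun i _ => sq_nonneg (f i 0)).mp hsum i (Finset.mem_univ i)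
  have hlim : Filter.Tendsto (fun s : ℝ => ∑ i, (s⁻¹ * f i s) ^ 2) (nhdsWithin 0 {0}ᶜ)
      (nhds (∑ i, f' i ^ 2)) := by
    refine tendsto_finsetSum _ fun i _ => Filter.Tendsto.pow ?_ 2
    simpa [hf0] using hasDerivAt_iff_tendsto_slope_zero.mp (hf i)
  have hconst : ∀ s ∈ ({0}ᶜ : Set ℝ), c = ∑ i, (s⁻¹ * f i s) ^ 2 := fun s hs => by
    simp only [mul_pow]
    rw [← Finset.mul_sum, ← h s, ← mul_assoc, ← mul_pow, inv_mul_cancel₀ hs, one_pow, one_mul]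
  exact tendsto_nhds_unique
    (tendsto_const_nhds.congr' (eventually_nhdsWithin_of_forall hconst)) hlim

lemma eq_sum_eval_dirDeriv_sq {ι : Type*} [Fintype ι] {q : ι → MvPolynomial σ ℝ}
    {a v : σ → ℝ} {c : ℝ} (h : ∀ s : ℝ, s ^ 2 * c = ∑ i, MvPolynomial.eval (a + s • v) (q i) ^ 2) :
    c = ∑ i, MvPolynomial.eval a (dirDeriv v (q i)) ^ 2 :=
  sum_deriv_sq_eq (fun i => by simpa using hasDerivAt_eval_add_smul (q i) a v 0) h

end DirectionalDerivative

section BilinearForms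

/-- The bilinear form `yᵀ V x` as a polynomial in the variables `x` and `y`. -/
def bilinearPolynomial {R α β : Type*} [CommSemiring R] [Fintype α] [Fintype β]
    (V : Matrix β α R) : MvPolynomial (α ⊕ β) R :=
  ∑ k, MvPolynomial.X (Sum.inr k) * MvPolynomial.rename Sum.inl (V.toMvPolynomial k)

lemma eval_bilinearPolynomial {R α β : Type*} [CommSemiring R] [Fintype α] [Fintype β]
    (V : Matrix β α R) (x : α → R) (y : β → R) :
    MvPolynomial.eval (Sum.elim x y) (bilinearPolynomial V) = y ⬝ᵥ (V *ᵥ x) := by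
  simp [bilinearPolynomial, MvPolynomial.eval_rename, toMvPolynomial_eval_eq_apply, dotProduct]

/-- The matrix of second partial derivatives `∂²q/∂yₖ∂xⱼ` at the origin. -/
def mixedHessian {R α β : Type*} [CommSemiring R] (q : MvPolynomial (α ⊕ β) R) : Matrix β α R :=
  of fun k j => MvPolynomial.eval 0
    (MvPolynomial.pderiv (Sum.inr k) (MvPolynomial.pderiv (Sum.inl j) q))

lemma eval_zero_dirDeriv_dirDeriv {R α β : Type*} [CommSemiring R] [Fintype α] [Fintype β]
    (q : MvPolynomial (α ⊕ β) R) (x : α → R) (y : β → R) :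
    MvPolynomial.eval 0 (dirDeriv (Sum.elim (0 : α → R) y) (dirDeriv (Sum.elim x (0 : β → R)) q)) =
      y ⬝ᵥ (mixedHessian q *ᵥ x) := by
  simp only [dirDeriv_apply, mixedHessian, dotProduct, mulVec, Fintype.sum_sum_type, Sum.elim_inl,
    Sum.elim_inr, Pi.zero_apply, zero_smul, Finset.sum_const_zero, zero_add, add_zero, map_sum,
    Derivation.map_smul, MvPolynomial.smul_eval, of_apply, Finset.mul_sum]
  rw [Finset.sum_comm]
  exact Finset.sum_congr rfl fun k _ => Finset.sum_congr rfl fun j _ => by ring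

lemma pPhi_eq_sum_mixedHessian_sq {n m : ℕ} {ι : Type*} [Fintype ι] {Φ : Sym n →ₗ[ℝ] Sym m}
    {q : ι → MvPolynomial (Fin n ⊕ Fin m) ℝ}
    (hq : ∀ x y, pPhi Φ x y = ∑ i, MvPolynomial.eval (Sum.elim x y) (q i) ^ 2)
    (x : Fin n → ℝ) (y : Fin m → ℝ) :
    pPhi Φ x y = ∑ i, (y ⬝ᵥ (mixedHessian (q i) *ᵥ x)) ^ 2 := by
  have deriv_in_x (y : Fin m → ℝ) : pPhi Φ x y =
      ∑ i, MvPolynomial.eval (Sum.elim (0 : Fin n → ℝ) y)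
        (dirDeriv (Sum.elim x (0 : Fin m → ℝ)) (q i)) ^ 2 := by
    refine eq_sum_eval_dirDeriv_sq fun s => ?_
    have hline : Sum.elim (0 : Fin n → ℝ) y + s • Sum.elim x (0 : Fin m → ℝ) =
        Sum.elim (s • x) y := by
      ext (j | k) <;> simp
    rw [hline, ← hq, pPhi_smul_left]
  have deriv_in_y : pPhi Φ x y =
      ∑ i, MvPolynomial.eval 0 (dirDeriv (Sum.elim (0 : Fin n → ℝ) y)
        (dirDeriv (Sum.elim x (0 : Fin m → ℝ)) (q i))) ^ 2 := by
    refine eq_sum_eval_dirDeriv_sq fun s => ?_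
    have hline : 0 + s • Sum.elim (0 : Fin n → ℝ) y = Sum.elim (0 : Fin n → ℝ) (s • y) := by
      ext (j | k) <;> simp
    rw [hline, ← deriv_in_x, pPhi_smul_right]
  simpa only [eval_zero_dirDeriv_dirDeriv] using deriv_in_y

end BilinearForms

end PosMapPaper

open PosMapPaper in
/-- **Proposition (complete positivity of a map versus the associated biform being a sum
of squares).**  A linear map `Φ : 𝕊_n → 𝕊_m` is completely positive if and only if the
associated biform `p_Φ(x,y) = yᵀ·Φ(x·xᵀ)·y` is a finite sum of squares of real
polynomials in the variables `x₁,…,xₙ, y₁,…,y_m`. -/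
theorem statement15 (n m : ℕ) (Φ : Sym n →ₗ[ℝ] Sym m) :
    IsCPMap Φ ↔
      ∃ (N : ℕ) (q : Fin N → MvPolynomial (Fin n ⊕ Fin m) ℝ),
        ∀ (x : Fin n → ℝ) (y : Fin m → ℝ),
          pPhi Φ x y = ∑ i, (MvPolynomial.eval (Sum.elim x y) (q i)) ^ 2 := by
  constructor
  · intro hΦ
    obtain ⟨N, V, hV⟩ := hΦ.exists_pPhi_eq_sum_sq
    exact ⟨N, fun i => bilinearPolynomial (V i), fun x y => by
      simp only [hV, eval_bilinearPolynomial]⟩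
  · rintro ⟨N, q, hq⟩
    have hΦ : Φ = krausMap fun i => mixedHessian (q i) := eq_of_pPhi_eq fun x y => by
      rw [pPhi_krausMap, pPhi_eq_sum_mixedHessian_sq hq]
    rw [hΦ]
    exact isCPMap_krausMap _
end
end
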